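/- arXiv:1101.5321 — 6 statements merged into one kernel-verified Lean document; each statement's English description precedes it below -/
import Mathlib

section
/- For every integer n ≥ 2, the permanent of the n×n matrix J_n − I − P equals the sum over k from 0 to n of (−1)^k · (2n/(2n−k)) · C(2n−k, k) · (n−k)! (Touchard's formula for the ménage numbers). -/
open Finset

/-- The `m × m` all-ones matrix `J_m` (integer entries). -/
def Jmat (m : ℕ) : Matrix (Fin m) (Fin m) ℤ := Matrix.of fun _ _ => 1

/-- The `m × m` permutation matrix `P` of the cycle `(1,2,...,m)`: entry `1` exactly at the
positions `(i, i+1 mod m)`, and `0` elsewhere. -/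
def Pmat (m : ℕ) : Matrix (Fin m) (Fin m) ℤ :=
  Matrix.of fun i j => if j.1 = (i.1 + 1) % m then 1 else 0

/-- The order-preserving embedding of `Fin (m-1)` into `Fin m` that skips index `a`. -/
def skipIdx {m : ℕ} (a : ℕ) (i : Fin (m - 1)) : Fin m :=
  if i.1 < a then ⟨i.1, by have := i.isLt; omega⟩ else ⟨i.1 + 1, by have := i.isLt; omega⟩

/-- The matrix obtained from the `m × m` matrix `M` by deleting row `a` and column `b`
(`0`-based indices; the paper's `M[1|r]`, deleting row `1` and column `r` in `1`-based
indexing, is `delRC M 0 (r-1)`). -/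
def delRC {m : ℕ} (M : Matrix (Fin m) (Fin m) ℤ) (a b : ℕ) :
    Matrix (Fin (m - 1)) (Fin (m - 1)) ℤ :=
  Matrix.of fun i j => M (skipIdx a i) (skipIdx b j)

/-- `rookNum M j` is the number of ways to place `j` non-attacking rooks on the `1`-entries
of the matrix `M`: the number of `j`-element sets of positions carrying entry `1`, no two of
which share a row or a column.  In particular `rookNum M 0 = 1`. -/
def rookNum {α β : Type*} [Fintype α] [Fintype β] [DecidableEq α] [DecidableEq β]
    (M : Matrix α β ℤ) (j : ℕ) : ℕ :=
  ((Finset.powersetCard j (Finset.univ : Finset (α × β))).filter fun S =>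
    ∀ p ∈ S, M p.1 p.2 = 1 ∧ ∀ q ∈ S, p ≠ q → p.1 ≠ q.1 ∧ p.2 ≠ q.2).card

/-- The binomial coefficient `C(a,b)` for integer arguments, with the convention that it
vanishes unless `0 ≤ b ≤ a`. -/
def intChoose (a b : ℤ) : ℤ :=
  if 0 ≤ b ∧ b ≤ a then (a.toNat.choose b.toNat : ℤ) else 0

/-!
Expanding `∏ i, (1 - A (σ i) i)` over sets of cells and summing over `σ` first expresses the
permanent of `J - A` through the rook numbers of `A`, because a set of `k` pairwise non-attacking
cells lies in the graphs of exactly `(n - k)!` permutations. The `2n` nonzero cells of `I + P`, read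
along its staircase, form a cycle in which two cells attack each other exactly when they are
adjacent, so its rook numbers count the `k`-subsets of a `2n`-cycle without adjacent elements.
Counting pairs (such a subset of the `m`-cycle, a point outside it) in two ways, and cutting the
cycle open at that point, shows that there are `m / (m - k) * C(m - k, k)` of them (Kaplansky).
-/

section RookExpansion

variable {α β γ ι : Type*}

/-- A set of cells (row, column) of a board on which rooks can stand without attacking each
other. -/
def IsNonAttacking (S : Finset (α × β)) : Prop :=
  (S : Set (α × β)).Pairwise fun p q => p.1 ≠ q.1 ∧ p.2 ≠ q.2

instance [DecidableEq α] [DecidableEq β] : DecidablePred (IsNonAttacking (α := α) (β := β)) :=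
  fun _ => inferInstanceAs (Decidable (Set.Pairwise _ _))

namespace IsNonAttacking

variable {S : Finset (α × β)}

lemma injOn_fst (hS : IsNonAttacking S) : Set.InjOn Prod.fst (S : Set (α × β)) :=
  fun _ hp _ hq h => by_contra fun hpq => (hS hp hq hpq).1 h

lemma injOn_snd (hS : IsNonAttacking S) : Set.InjOn Prod.snd (S : Set (α × β)) :=
  fun _ hp _ hq h => by_contra fun hpq => (hS hp hq hpq).2 h

lemma card_le [Fintype β] (hS : IsNonAttacking S) : #S ≤ Fintype.card β :=
  card_le_card_of_injOn Prod.snd (by simp) hS.injOn_snd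

end IsNonAttacking

/-- The cells `(σ i, i)` of the permutation matrix of `σ`, in the row-column order of
`Matrix.permanent`. -/
def permCells [Fintype α] [DecidableEq α] (σ : Equiv.Perm α) : Finset (α × α) :=
  univ.image fun i => (σ i, i)

lemma subset_permCells_iff [Fintype α] [DecidableEq α] {S : Finset (α × α)} {σ : Equiv.Perm α} :
    S ⊆ permCells σ ↔ ∀ p ∈ S, σ p.2 = p.1 :=
  forall₂_congr fun p _ => by simp [permCells, Prod.ext_iff]

lemma isNonAttacking_of_subset_permCells [Fintype α] [DecidableEq α] {S : Finset (α × α)}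
    {σ : Equiv.Perm α} (hS : S ⊆ permCells σ) : IsNonAttacking S := by
  rw [subset_permCells_iff] at hS
  intro p hp q hq hpq
  refine ⟨fun h => hpq (Prod.ext h ?_), fun h => hpq (Prod.ext ?_ h)⟩
  · exact σ.injective (by rw [hS p hp, hS q hq, h])
  · rw [← hS p hp, ← hS q hq, h]

lemma card_perm_extending_pair [Fintype ι] [Fintype α] [DecidableEq α] {f g : ι → α}
    (hf : f.Injective) (hg : g.Injective) :
    Fintype.card {σ : Equiv.Perm α // ∀ i, σ (f i) = g i} =
      (Fintype.card α - Fintype.card ι).factorial := by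
  classical
  obtain ⟨τ, hτ⟩ := Equiv.Perm.exists_extending_pair f g hf hg
  have fixing_range : {σ : Equiv.Perm α // ∀ i, σ (f i) = g i} ≃
      {ρ : Equiv.Perm α // ∀ a, ¬ a ∉ Set.range f → ρ a = a} :=
    (Equiv.mulLeft τ⁻¹).subtypeEquiv fun σ => by simp [Equiv.symm_apply_eq, hτ]
  rw [Fintype.card_congr fixing_range,
    Fintype.card_congr (Equiv.Perm.subtypeEquivSubtypePerm (· ∉ Set.range f)).symm,
    Fintype.card_perm, Fintype.card_subtype_compl]
  congr 2
  exact Set.card_range_of_injective hf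

lemma IsNonAttacking.card_perm_extending [Fintype α] [DecidableEq α] {S : Finset (α × α)}
    (hS : IsNonAttacking S) :
    #{σ : Equiv.Perm α | S ⊆ permCells σ} = (Fintype.card α - #S).factorial := by
  have := card_perm_extending_pair hS.injOn_snd.injective hS.injOn_fst.injective
  simpa [subset_permCells_iff, Fintype.card_subtype] using this

theorem permanent_allOnes_sub {R : Type*} [CommRing R] [Fintype α] [DecidableEq α]
    (A : Matrix α α R) :
    (Matrix.of (fun _ _ => 1) - A).permanent =
      ∑ S : Finset (α × α) with IsNonAttacking S,
        (∏ p ∈ S, -A p.1 p.2) * (Fintype.card α - #S).factorial := by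
  have expand (σ : Equiv.Perm α) : ∏ i, (Matrix.of (fun _ _ => 1) - A : Matrix α α R) (σ i) i =
      ∑ S ∈ (permCells σ).powerset, ∏ p ∈ S, -A p.1 p.2 := by
    rw [← prod_one_add, permCells, prod_image fun _ _ _ _ h => congr_arg Prod.snd h]
    simp [sub_eq_add_neg]
  calc (Matrix.of (fun _ _ => 1) - A).permanent
      = ∑ σ : Equiv.Perm α, ∑ S ∈ (permCells σ).powerset, ∏ p ∈ S, -A p.1 p.2 :=
        sum_congr rfl fun σ _ => expand σ
    _ = ∑ S : Finset (α × α) with IsNonAttacking S,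
          ∑ σ : Equiv.Perm α with S ⊆ permCells σ, ∏ p ∈ S, -A p.1 p.2 := by
        refine sum_comm' fun σ S => ?_
        simpa using isNonAttacking_of_subset_permCells
    _ = _ := by
        refine sum_congr rfl fun S hS => ?_
        rw [sum_const, (mem_filter.mp hS).2.card_perm_extending, nsmul_eq_mul, mul_comm]

lemma rookNum_eq_card_isNonAttacking [Fintype α] [Fintype β] [DecidableEq α] [DecidableEq β]
    (A : Matrix α β ℤ) (k : ℕ) :
    rookNum A k =
      #{S ∈ powersetCard k univ | IsNonAttacking S ∧ ∀ p ∈ S, A p.1 p.2 = 1} := by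
  unfold rookNum
  congr 1
  refine filter_congr fun S _ => ?_
  rw [forall₂_and, and_comm]
  rfl

theorem permanent_allOnes_sub_eq_sum_rookNum [Fintype α] [DecidableEq α] {A : Matrix α α ℤ}
    (hA : ∀ i j, A i j = 0 ∨ A i j = 1) :
    (Matrix.of (fun _ _ => 1) - A).permanent = ∑ k ∈ range (Fintype.card α + 1),
      (-1 : ℤ) ^ k * rookNum A k * (Fintype.card α - k).factorial := by
  have weight (S : Finset (α × α)) :
      ∏ p ∈ S, -A p.1 p.2 = if ∀ p ∈ S, A p.1 p.2 = 1 then (-1) ^ #S else 0 := by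
    split_ifs with h
    · rw [prod_congr rfl fun p hp => by rw [h p hp], prod_const]
    · push Not at h
      obtain ⟨p, hp, hp1⟩ := h
      exact prod_eq_zero hp (by simpa using (hA p.1 p.2).resolve_right hp1)
  simp only [permanent_allOnes_sub, weight, ite_mul, zero_mul, ← sum_filter, filter_filter]
  rw [← sum_fiberwise_of_maps_to (g := Finset.card) (t := range (Fintype.card α + 1))
    fun S hS => mem_range_succ_iff.mpr (mem_filter.mp hS).2.1.card_le]
  refine sum_congr rfl fun k _ => ?_
  rw [sum_congr rfl fun S hS => by rw [(mem_filter.mp hS).2], sum_const,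
    rookNum_eq_card_isNonAttacking, powersetCard_eq_filter, powerset_univ, filter_comm,
    nsmul_eq_mul]
  ring

lemma rookNum_eq_card_of_range_eq [Fintype α] [Fintype β] [Fintype γ] [DecidableEq α]
    [DecidableEq β] {A : Matrix α β ℤ} (e : γ ↪ α × β)
    (he : ∀ p, p ∈ Set.range e ↔ A p.1 p.2 = 1) (k : ℕ) :
    rookNum A k = #{S ∈ powersetCard k (univ : Finset γ) | IsNonAttacking (S.map e)} := by
  have cells : {S ∈ powersetCard k (univ : Finset (α × β)) |
        IsNonAttacking S ∧ ∀ p ∈ S, A p.1 p.2 = 1} =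
      {S ∈ powersetCard k (univ.map e) | IsNonAttacking S} := by
    ext S
    simp only [mem_filter, mem_powersetCard, subset_iff, mem_map, mem_univ, true_and, ← he,
      Set.mem_range]
    tauto
  rw [rookNum_eq_card_isNonAttacking, cells, powersetCard_map, filter_map, card_map]
  rfl

end RookExpansion

section Kaplansky

/-- No two elements of `S` are consecutive; on `Fin m`, where `+` wraps around, this is the
condition on the cycle, so that `m - 1` and `0` count as consecutive. -/
def NoConsecutive {α : Type*} [Add α] [One α] (S : Finset α) : Prop := ∀ i ∈ S, i + 1 ∉ S

instance {α : Type*} [Add α] [One α] [DecidableEq α] :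
    DecidablePred (NoConsecutive (α := α)) :=
  fun S => inferInstanceAs (Decidable (∀ i ∈ S, i + 1 ∉ S))

lemma noConsecutive_insert_iff {m : ℕ} {S : Finset ℕ} (hS : S ⊆ range (m + 1)) :
    NoConsecutive (insert (m + 1) S) ↔ NoConsecutive S ∧ m ∉ S := by
  have lt {i : ℕ} (hi : i ∈ S) : i < m + 1 := mem_range.mp (hS hi)
  simp only [NoConsecutive, mem_insert]
  grind

lemma card_noConsecutive_range_succ_succ (m k : ℕ) :
    #{S ∈ powersetCard (k + 1) (range (m + 2)) | NoConsecutive S} =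
      #{S ∈ powersetCard (k + 1) (range (m + 1)) | NoConsecutive S} +
        #{S ∈ powersetCard k (range m) | NoConsecutive S} := by
  have insert_last : {S ∈ powersetCard k (range (m + 1)) | NoConsecutive (insert (m + 1) S)} =
      {S ∈ powersetCard k (range m) | NoConsecutive S} := by
    ext S
    simp only [mem_filter, mem_powersetCard]
    constructor
    · rintro ⟨⟨hS, hk⟩, h⟩
      obtain ⟨hcons, hm⟩ := (noConsecutive_insert_iff hS).mp h
      exact ⟨⟨(subset_insert_iff_of_notMem hm).mp (range_add_one ▸ hS), hk⟩, hcons⟩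
    · rintro ⟨⟨hS, hk⟩, h⟩
      have hS' := hS.trans (range_subset_range.mpr m.le_succ)
      exact ⟨⟨hS', hk⟩, (noConsecutive_insert_iff hS').mpr ⟨h, fun hm => by simpa using hS hm⟩⟩
  rw [range_add_one (n := m + 1), powersetCard_succ_insert (by simp),
    filter_union, card_union_of_disjoint, filter_image, card_image_of_injOn, insert_last]
  · intro S hS T hT h
    have notMem {U : Finset ℕ} (hU : U ∈ powersetCard k (range (m + 1))) : m + 1 ∉ U :=
      fun h => by simpa using (mem_powersetCard.mp hU).1 h
    rw [← erase_insert (notMem (mem_filter.mp hS).1), h, erase_insert (notMem (mem_filter.mp hT).1)]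
  · rw [disjoint_left]
    intro S hS hS'
    obtain ⟨T, -, rfl⟩ := mem_image.mp (mem_filter.mp hS').1
    simpa using (mem_powersetCard.mp (mem_filter.mp hS).1).1 (mem_insert_self _ T)

theorem card_noConsecutive_range (m k : ℕ) :
    #{S ∈ powersetCard k (range m) | NoConsecutive S} = (m + 1 - k).choose k := by
  induction m using Nat.twoStepInduction generalizing k with
  | zero =>
    cases k with
    | zero => simp [filter_singleton, NoConsecutive]
    | succ k => simp
  | one =>
    rcases k with _ | _ | k <;>
      simp [filter_singleton, NoConsecutive, powersetCard_eq_empty.mpr, powersetCard_one]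
  | more m ih₀ ih₁ =>
    cases k with
    | zero => simp [filter_singleton, NoConsecutive]
    | succ k =>
      rw [card_noConsecutive_range_succ_succ, ih₀, ih₁]
      obtain hk | hk := le_or_gt k (m + 1)
      · rw [show m + 2 + 1 - (k + 1) = m + 1 - k + 1 by omega,
          show m + 1 + 1 - (k + 1) = m + 1 - k by omega, Nat.choose_succ_succ', add_comm]
      · rw [Nat.choose_eq_zero_of_lt, Nat.choose_eq_zero_of_lt, Nat.choose_eq_zero_of_lt] <;>
          omega

variable {m : ℕ}

lemma noConsecutive_map_val_iff {S : Finset (Fin (m + 1))} (hS : Fin.last m ∉ S) :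
    NoConsecutive (S.map Fin.valEmbedding) ↔ NoConsecutive S := by
  unfold NoConsecutive
  rw [forall_mem_map]
  refine forall₂_congr fun i hi => ?_
  have hlast : i ≠ Fin.last m := fun h => hS (h ▸ hi)
  rw [Fin.valEmbedding_apply, ← Fin.val_add_one_of_lt (Fin.lt_last_iff_ne_last.mpr hlast),
    ← Fin.valEmbedding_apply, mem_map']

lemma card_noConsecutive_last_notMem (m k : ℕ) :
    #{S ∈ powersetCard k (univ : Finset (Fin (m + 1))) | NoConsecutive S ∧ Fin.last m ∉ S} =
      (m + 1 - k).choose k := by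
  have range_eq : range m = (univ.erase (Fin.last m)).map Fin.valEmbedding := by
    rw [map_erase, Fin.map_valEmbedding_univ]
    ext i
    simp only [mem_range, mem_erase, mem_Iio, Fin.valEmbedding_apply, Fin.val_last]
    omega
  rw [← card_noConsecutive_range, range_eq, powersetCard_map, filter_map, card_map]
  congr 1
  ext S
  simp only [mem_filter, mem_powersetCard, subset_erase, subset_univ, true_and,
    Function.comp_apply, RelEmbedding.coe_toEmbedding, mapEmbedding_apply]
  grind [noConsecutive_map_val_iff]

lemma noConsecutive_map_addRight_iff {α : Type*} [AddCommGroup α] [One α] {S : Finset α} (c : α) :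
    NoConsecutive (S.map (Equiv.addRight c).toEmbedding) ↔ NoConsecutive S := by
  unfold NoConsecutive
  rw [forall_mem_map]
  refine forall₂_congr fun i _ => ?_
  simp [add_right_comm i c 1]

lemma card_noConsecutive_notMem (i : Fin (m + 1)) (k : ℕ) :
    #{S ∈ powersetCard k (univ : Finset (Fin (m + 1))) | NoConsecutive S ∧ i ∉ S} =
      (m + 1 - k).choose k := by
  rw [← card_noConsecutive_last_notMem]
  refine card_equiv (Equiv.addRight (Fin.last m - i)).finsetCongr fun S => ?_
  simp [noConsecutive_map_addRight_iff]

theorem sub_mul_card_noConsecutive_fin [NeZero m] (k : ℕ) :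
    (m - k) * #{S ∈ powersetCard k (univ : Finset (Fin m)) | NoConsecutive S} =
      m * (m - k).choose k := by
  obtain ⟨m, rfl⟩ := Nat.exists_eq_succ_of_ne_zero (NeZero.ne m)
  have double_count := sum_card_bipartiteAbove_eq_sum_card_bipartiteBelow
    (s := {S ∈ powersetCard k (univ : Finset (Fin (m + 1))) | NoConsecutive S}) (t := univ)
    fun S i => i ∉ S
  have card_compl {S : Finset (Fin (m + 1))}
      (hS : S ∈ ({S ∈ powersetCard k univ | NoConsecutive S} : Finset (Finset (Fin (m + 1))))) :
      #{i | i ∉ S} = m + 1 - k := by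
    rw [filter_not, filter_mem_eq_inter, univ_inter, ← compl_eq_univ_sdiff,
      card_compl, (mem_powersetCard.mp (mem_filter.mp hS).1).2, Fintype.card_fin]
  simp only [bipartiteAbove, bipartiteBelow, filter_filter, card_noConsecutive_notMem,
    sum_congr rfl fun _ hS => card_compl hS, sum_const, card_univ, Fintype.card_fin,
    smul_eq_mul] at double_count
  rw [mul_comm, double_count]

end Kaplansky

section Menage

lemma mod_eq_ite_of_le {x m : ℕ} (hx : x ≤ m) : x % m = if x = m then 0 else x := by
  split_ifs with h
  · rw [h, Nat.mod_self]
  · exact Nat.mod_eq_of_lt (by omega)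

variable {n : ℕ} [n.AtLeastTwo]

/-- The nonzero cells of `I + P` in the cyclic order
`(0, 0), (0, 1), (1, 1), (1, 2), …, (n - 1, n - 1), (n - 1, 0)`, in which two cells share a row
or a column exactly when they are neighbours. -/
def menageCell : Fin (2 * n) ↪ Fin n × Fin n where
  toFun a := (⟨a / 2, by omega⟩, ⟨(a + 1) / 2 % n, Nat.mod_lt _ (NeZero.pos n)⟩)
  inj' a b h := by
    have hn := Nat.AtLeastTwo.prop (n := n)
    simp only [Prod.mk.injEq, Fin.mk.injEq,
      mod_eq_ite_of_le (show (a.1 + 1) / 2 ≤ n by omega),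
      mod_eq_ite_of_le (show (b.1 + 1) / 2 ≤ n by omega)] at h
    grind

lemma menageCell_fst_val (a : Fin (2 * n)) : (menageCell a).1.1 = a / 2 := rfl

lemma menageCell_snd_val (a : Fin (2 * n)) :
    (menageCell a).2.1 = if (a.1 + 1) / 2 = n then 0 else (a.1 + 1) / 2 :=
  mod_eq_ite_of_le (by omega)

lemma one_add_Pmat_apply (i j : Fin n) :
    (1 + Pmat n) i j = if j = i ∨ j.1 = (i.1 + 1) % n then 1 else 0 := by
  have hn := Nat.AtLeastTwo.prop (n := n)
  have : i.1 ≠ (i.1 + 1) % n := by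
    rw [mod_eq_ite_of_le (by omega)]
    split_ifs <;> omega
  simp only [Matrix.add_apply, Matrix.one_apply, Pmat, Matrix.of_apply]
  grind

lemma mem_range_menageCell_iff (p : Fin n × Fin n) :
    p ∈ Set.range menageCell ↔ (1 + Pmat n) p.1 p.2 = 1 := by
  obtain ⟨i, j⟩ := p
  simp only [one_add_Pmat_apply, mod_eq_ite_of_le (show i.1 + 1 ≤ n by omega), ite_eq_left_iff,
    zero_ne_one, imp_false, not_not, Set.mem_range, Prod.ext_iff, Fin.ext_iff,
    menageCell_fst_val, menageCell_snd_val]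
  constructor
  · grind
  · rintro (hj | hj)
    · exact ⟨⟨2 * i, by omega⟩, by grind⟩
    · exact ⟨⟨2 * i + 1, by omega⟩, by grind⟩

lemma menageCell_nonattacking_iff {a b : Fin (2 * n)} (hab : a ≠ b) :
    (menageCell a).1 ≠ (menageCell b).1 ∧ (menageCell a).2 ≠ (menageCell b).2 ↔
      b ≠ a + 1 ∧ a ≠ b + 1 := by
  have hn := Nat.AtLeastTwo.prop (n := n)
  have val_add_one (c : Fin (2 * n)) : (c + 1).1 = if c.1 + 1 = 2 * n then 0 else c.1 + 1 := by
    rw [← mod_eq_ite_of_le c.2, Fin.val_add, Fin.val_one', Nat.add_mod_mod]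
  simp only [ne_eq, Fin.ext_iff, val_add_one, menageCell_fst_val, menageCell_snd_val] at hab ⊢
  split_ifs <;> omega

lemma isNonAttacking_map_menageCell_iff (S : Finset (Fin (2 * n))) :
    IsNonAttacking (S.map menageCell) ↔ NoConsecutive S := by
  unfold IsNonAttacking
  rw [coe_map, menageCell.injective.injOn.pairwise_image]
  constructor
  · intro h i hi hi'
    have : Nontrivial (Fin (2 * n)) :=
      Fin.nontrivial_iff_two_le.mpr (by have := Nat.AtLeastTwo.prop (n := n); omega)
    have hne : i ≠ i + 1 := by simp
    exact ((menageCell_nonattacking_iff hne).mp (h hi hi' hne)).1 rfl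
  · intro h a ha b hb hab
    exact (menageCell_nonattacking_iff hab).mpr
      ⟨fun hba => h a ha (hba ▸ hb), fun hab' => h b hb (hab' ▸ ha)⟩

theorem sub_mul_rookNum_one_add_Pmat (k : ℕ) :
    (2 * n - k) * rookNum (1 + Pmat n) k = 2 * n * (2 * n - k).choose k := by
  rw [rookNum_eq_card_of_range_eq menageCell mem_range_menageCell_iff]
  simp only [isNonAttacking_map_menageCell_iff]
  exact sub_mul_card_noConsecutive_fin k

theorem rookNum_one_add_Pmat {k : ℕ} (hk : k < 2 * n) :
    (rookNum (1 + Pmat n) k : ℚ) = 2 * n / (2 * n - k) * (2 * n - k).choose k := by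
  have cast_sub : ((2 * n - k : ℕ) : ℚ) = 2 * n - k := by
    rw [Nat.cast_sub hk.le]
    norm_num
  have sub_ne : (2 * n - k : ℚ) ≠ 0 := by
    rw [← cast_sub]
    exact_mod_cast (Nat.sub_pos_of_lt hk).ne'
  rw [div_mul_eq_mul_div, eq_div_iff sub_ne, mul_comm, ← cast_sub]
  exact_mod_cast sub_mul_rookNum_one_add_Pmat k

end Menage

/-- **Touchard's formula.**  For every `n ≥ 2`, the permanent of `J_n - I - P` equals
`∑_{k=0}^{n} (-1)^k · (2n/(2n-k)) · C(2n-k, k) · (n-k)!`. -/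
theorem touchard_menage (n : ℕ) (hn : 2 ≤ n) :
    ((Jmat n - 1 - Pmat n).permanent : ℚ) =
      ∑ k ∈ Finset.range (n + 1),
        (-1 : ℚ) ^ k * (2 * n / (2 * (n : ℚ) - (k : ℚ))) *
          (Nat.choose (2 * n - k) k : ℚ) * (Nat.factorial (n - k) : ℚ) := by
  have : n.AtLeastTwo := ⟨hn⟩
  have zero_or_one (i j : Fin n) : (1 + Pmat n) i j = 0 ∨ (1 + Pmat n) i j = 1 := by
    rw [one_add_Pmat_apply]
    split_ifs <;> simp
  have rook_expansion : (Jmat n - 1 - Pmat n).permanent =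
      ∑ k ∈ range (n + 1), (-1 : ℤ) ^ k * rookNum (1 + Pmat n) k * (n - k).factorial := by
    rw [sub_sub, Jmat, permanent_allOnes_sub_eq_sum_rookNum zero_or_one, Fintype.card_fin]
  rw [rook_expansion]
  push_cast
  refine sum_congr rfl fun k hk => ?_
  have hkn : k < 2 * n := by have := mem_range.mp hk; omega
  rw [rookNum_one_add_Pmat hkn]
  ring
end

section
/- Let H_n = per(J_n − I − P). Then H_2 = 0, H_3 = 1, and for every integer n ≥ 4 one has the Cayley recursion (n−2)·H_n = n(n−2)·H_{n−1} + n·H_{n−2} + 4·(−1)^{n+1}. -/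
open Finset

/-!
Expand every row of `J - I - P` into `1`, minus the diagonal entry and minus the entry after it. A
choice for each row is a placement of rooks of weight `-1`; if two rooks attack each other it
contributes nothing to the permanent, and otherwise its `k` rooks extend to `(n - k)!` permutations.
So the permanent is the image of the rook polynomial `∑ (-1)^k r_k x^(n-k)` under the functional
`L : x^k ↦ k!`. Only cyclically neighbouring rows can attack each other, so this polynomial is the
trace of the `n`-th power of a `3 × 3` matrix with characteristic polynomial
`t (t² - (x - 2) t + 1)`, that is, the Vieta–Lucas polynomial `C_n` at `x - 2`. Integration by
parts, `L p' = L p - p(0)`, turns `C_n' = n S_{n-1}` and `C_n = S_n - S_{n-2}` into the recursion,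
whose constant term comes from `C_n(-2) = 2 (-1)^n`.
-/

open Equiv Polynomial
open scoped Nat

section FactorialFunctional

/-- The linear functional `L` on polynomials with `L (X ^ k) = k!`, an algebraic stand-in for
`p ↦ ∫₀^∞ p(x) e^(-x) dx`. -/
noncomputable def factorialFunctional (R : Type*) [CommSemiring R] : R[X] →ₗ[R] R :=
  Polynomial.lsum fun k => (k ! : R) • LinearMap.id

theorem factorialFunctional_monomial {R : Type*} [CommSemiring R] (k : ℕ) (a : R) :
    factorialFunctional R (monomial k a) = k ! * a := by
  simp [factorialFunctional, lsum_apply, sum_monomial_index]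

theorem factorialFunctional_derivative {R : Type*} [CommRing R] (p : R[X]) :
    factorialFunctional R (derivative p) = factorialFunctional R p - p.eval 0 := by
  induction p using Polynomial.induction_on' with
  | add p q hp hq => simp only [map_add, eval_add, hp, hq]; ring
  | monomial n a =>
    rw [derivative_monomial, factorialFunctional_monomial, factorialFunctional_monomial]
    cases n with
    | zero => simp
    | succ n =>
      have heval : (monomial (n + 1) a).eval 0 = 0 := by simp
      rw [heval, Nat.add_sub_cancel, Nat.factorial_succ]
      push_cast
      ring

end FactorialFunctional

section Chebyshev

variable (R : Type*) [CommRing R]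

theorem chebyshev_C_eq_S_sub_S (n : ℤ) :
    Chebyshev.C R n = Chebyshev.S R n - Chebyshev.S R (n - 2) := by
  rw [Chebyshev.C_eq_S_sub_X_mul_S, Chebyshev.S_sub_two]
  ring

theorem derivative_chebyshev_C (n : ℤ) :
    derivative (Chebyshev.C R n) = n * Chebyshev.S R (n - 1) := by
  induction n using Chebyshev.induct with
  | zero => simp
  | one => simp
  | add_two n ih₁ ih₂ =>
    have hC := congrArg derivative (Chebyshev.C_add_two R n)
    have hS := Chebyshev.S_sub_one R n
    have hCS := Chebyshev.C_eq_S_sub_X_mul_S R (n + 1)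
    simp only [derivative_sub, derivative_mul, derivative_X] at hC
    linear_combination (norm := (push_cast; ring_nf)) hC - ih₂ + (X : R[X]) * ih₁ + hCS - n * hS
  | neg_add_one n ih₁ ih₂ =>
    have hC := congrArg derivative (Chebyshev.C_sub_one R (-n))
    have hS := Chebyshev.S_sub_two R (-n)
    have hCS := Chebyshev.C_eq_S_sub_X_mul_S R (-n)
    simp only [derivative_sub, derivative_mul, derivative_X] at hC
    linear_combination (norm := (push_cast; ring_nf))
      hC - ih₂ + (X : R[X]) * ih₁ + hCS + (n + 1) * hS

theorem mul_factorialFunctional_chebyshev_S (n : ℤ) :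
    n * factorialFunctional R ((Chebyshev.S R (n - 1)).comp (X - 2)) =
      factorialFunctional R ((Chebyshev.C R n).comp (X - 2)) - 2 * n.negOnePow := by
  have hderiv : derivative ((Chebyshev.C R n).comp (X - 2)) =
      (n : R) • (Chebyshev.S R (n - 1)).comp (X - 2) := by
    simp [derivative_comp, derivative_chebyshev_C, smul_eq_C_mul]
  have hparts := factorialFunctional_derivative ((Chebyshev.C R n).comp (X - 2))
  simpa [hderiv, eval_comp] using hparts

theorem factorialFunctional_chebyshev_C_recursion (n : ℤ) :
    (n - 2) * factorialFunctional R ((Chebyshev.C R n).comp (X - 2)) =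
      n * (n - 2) * factorialFunctional R ((Chebyshev.C R (n - 1)).comp (X - 2)) +
        n * factorialFunctional R ((Chebyshev.C R (n - 2)).comp (X - 2)) -
          4 * n.negOnePow := by
  have hn := mul_factorialFunctional_chebyshev_S R n
  have hn2 := mul_factorialFunctional_chebyshev_S R (n - 2)
  have hsplit : factorialFunctional R ((Chebyshev.C R (n - 1)).comp (X - 2)) =
      factorialFunctional R ((Chebyshev.S R (n - 1)).comp (X - 2)) -
        factorialFunctional R ((Chebyshev.S R (n - 2 - 1)).comp (X - 2)) := by
    rw [chebyshev_C_eq_S_sub_S, sub_comp, map_sub, sub_right_comm]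
  have hsign : (n - 2).negOnePow = n.negOnePow := by
    rw [Int.negOnePow_sub, Int.negOnePow_even 2 even_two, mul_one]
  rw [hsign] at hn2
  push_cast at hn2
  rw [hsplit]
  linear_combination (2 - n : R) * hn + n * hn2

end Chebyshev

section RookPlacements

/-- A partially defined placement of rooks, with `j ∈ g i` when the rook of row `i` stands in
column `j`, is non-attacking when no column holds two rooks. -/
def NonAttacking {α β : Type*} (g : α → Option β) : Prop :=
  ∀ ⦃i i' j⦄, j ∈ g i → j ∈ g i' → i = i'

theorem nonAttacking_of_injective {α β : Type*} {g : α → Option β} {σ : α → β}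
    (hσ : Function.Injective σ) (hg : ∀ i, ∀ j ∈ g i, σ i = j) : NonAttacking g :=
  fun i i' j hi hi' => hσ ((hg i j hi).trans (hg i' j hi').symm)

variable {ι κ R : Type*}

theorem NonAttacking.exists_perm [Finite ι] {g : ι → Option ι} (hg : NonAttacking g) :
    ∃ σ : Perm ι, ∀ i, ∀ j ∈ g i, σ i = j := by
  classical
  cases nonempty_fintype ι
  have hinj : Set.InjOn (fun i => (g i).getD i) (univ.filter fun i => g i ≠ none : Finset ι) := by
    intro i hi i' hi' h
    obtain ⟨j, hj⟩ := Option.ne_none_iff_exists'.mp (mem_filter.mp hi).2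
    obtain ⟨j', hj'⟩ := Option.ne_none_iff_exists'.mp (mem_filter.mp hi').2
    have hjj' : j = j' := by simpa [hj, hj'] using h
    exact hg hj (hjj' ▸ hj')
  obtain ⟨σ, hσ⟩ := exists_equiv_extend_of_card_eq (t := univ) card_univ.symm (subset_univ _) hinj
  refine ⟨σ.trans (Equiv.subtypeUnivEquiv mem_univ), fun i j hj => ?_⟩
  have hj' : g i = some j := hj
  simpa [hj'] using hσ i (by simp [hj'])

variable [Fintype ι]

theorem NonAttacking.card_perm [DecidableEq ι] {g : ι → Option ι} (hg : NonAttacking g) :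
    #{σ : Perm ι | ∀ i, ∀ j ∈ g i, σ i = j} = (#{i | g i = none})! := by
  obtain ⟨τ, hτ⟩ := hg.exists_perm
  have hiff (σ : Perm ι) :
      (∀ i, ∀ j ∈ g i, σ i = j) ↔ ∀ i, ¬ g i = none → (τ⁻¹ * σ) i = i := by
    refine forall_congr' fun i => ?_
    rcases hi : g i with _ | j
    · simp
    · have hτi : τ i = j := hτ i j hi
      simp [← hτi, Equiv.symm_apply_eq]
  calc #{σ : Perm ι | ∀ i, ∀ j ∈ g i, σ i = j}
      = #{σ : Perm ι | ∀ i, ¬ g i = none → σ i = i} :=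
        card_equiv (Equiv.mulLeft τ⁻¹) fun σ => by
          simp only [mem_filter_univ, hiff, Equiv.coe_mulLeft]
    _ = (#{i | g i = none})! := by
        rw [← Fintype.card_subtype, ← Fintype.card_subtype, ← Fintype.card_perm]
        exact Fintype.card_congr (Perm.subtypeEquivSubtypePerm fun i => g i = none).symm

theorem sum_perm_prod_elim_ite [DecidableEq ι] [CommSemiring R] (f : ι → κ → ι) (w : ι → κ → R)
    (c : ι → Option κ) :
    ∑ σ : Perm ι, ∏ i, (c i).elim 1 (fun k => if σ i = f i k then w i k else 0) =
      #{σ : Perm ι | ∀ i, ∀ j ∈ (c i).map (f i), σ i = j} * ∏ i, (c i).elim 1 (w i) := by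
  have hfactor (σ : Perm ι) (i : ι) :
      (c i).elim 1 (fun k => if σ i = f i k then w i k else 0) =
        if ∀ j ∈ (c i).map (f i), σ i = j then (c i).elim 1 (w i) else 0 := by
    cases c i <;> simp
  simp_rw [hfactor, Fintype.prod_ite_zero]
  rw [← sum_filter, sum_const, nsmul_eq_mul]

theorem prod_elim_X_C [CommSemiring R] (w : ι → κ → R) (c : ι → Option κ) :
    ∏ i, (c i).elim X (fun k => C (w i k)) =
      monomial #{i | c i = none} (∏ i, (c i).elim 1 (w i)) := by
  have hfactor (i : ι) : (c i).elim X (fun k => C (w i k)) =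
      C ((c i).elim 1 (w i)) * if c i = none then X else 1 := by
    cases c i <;> simp
  simp_rw [hfactor, prod_mul_distrib, ← prod_filter, prod_const, ← map_prod,
    C_mul_X_pow_eq_monomial]

variable [DecidableEq ι] [Fintype κ]

open Classical in
/-- The weighted rook polynomial `∑ r_k X^(n - k)` of the board whose row `i` has the cells
`(i, f i k)` with weights `w i k`: here `r_k` is the total weight of the placements of `k`
non-attacking rooks. A placement is encoded by the label `c i` of the cell taken in row `i`. -/
noncomputable def rookPolynomial [CommSemiring R] (f : ι → κ → ι) (w : ι → κ → R) : R[X] :=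
  ∑ c : ι → Option κ with NonAttacking fun i => (c i).map (f i),
    ∏ i, (c i).elim X fun k => C (w i k)

theorem permanent_one_add_sum_ite [CommSemiring R] (f : ι → κ → ι) (w : ι → κ → R) :
    (Matrix.of fun i j => 1 + ∑ k, if j = f i k then w i k else 0).permanent =
      factorialFunctional R (rookPolynomial f w) := by
  classical
  have hentry (i j : ι) : (1 + ∑ k, if j = f i k then w i k else 0) =
      ∑ o : Option κ, o.elim 1 fun k => if j = f i k then w i k else 0 := by
    simp [Fintype.sum_option]
  rw [← Matrix.permanent_transpose, Matrix.permanent]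
  simp only [Matrix.transpose_apply, Matrix.of_apply, hentry, Fintype.prod_sum]
  rw [sum_comm, rookPolynomial, map_sum, sum_filter]
  refine sum_congr rfl fun c _ => ?_
  rw [sum_perm_prod_elim_ite, prod_elim_X_C, factorialFunctional_monomial]
  split_ifs with hc
  · rw [hc.card_perm]
    simp only [Option.map_eq_none_iff]
  · rw [filter_eq_empty_iff.mpr fun σ _ hσ => hc (nonAttacking_of_injective σ.injective hσ)]
    simp

end RookPlacements

section ClosedWalks

variable {ι R : Type*} [Fintype ι] [DecidableEq ι] [CommSemiring R]

theorem matrix_pow_succ_apply_eq_sum_walks (T : Matrix ι ι R) (m : ℕ) (a b : ι) :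
    (T ^ (m + 1)) a b =
      ∑ c : Fin m → ι, ∏ i, T (Fin.cons (α := fun _ => ι) a c i)
        (Fin.snoc (α := fun _ => ι) c b i) := by
  induction m generalizing a with
  | zero => simp [Fin.snoc]
  | succ m ih =>
    rw [pow_succ', Matrix.mul_apply, ← (Fin.consEquiv fun _ => ι).sum_comp,
      Fintype.sum_prod_type]
    refine sum_congr rfl fun x _ => ?_
    rw [ih, mul_sum]
    refine sum_congr rfl fun c _ => ?_
    simp [Fin.consEquiv, ← Fin.cons_snoc_eq_snoc_cons, Fin.prod_univ_succ (n := m + 1)]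

theorem trace_pow_eq_sum_closed_walks (T : Matrix ι ι R) (m : ℕ) :
    (T ^ (m + 1)).trace = ∑ c : Fin (m + 1) → ι, ∏ i, T (c i) (c (i + 1)) := by
  rw [← (Fin.consEquiv fun _ => ι).sum_comp, Fintype.sum_prod_type, Matrix.trace]
  refine sum_congr rfl fun a _ => ?_
  rw [Matrix.diag_apply, matrix_pow_succ_apply_eq_sum_walks]
  refine sum_congr rfl fun c _ => prod_congr rfl fun i _ => ?_
  congr 1
  cases i using Fin.lastCases <;> simp [Fin.consEquiv]

end ClosedWalks

section CycleBoard

/-- The board supporting `I + P`: row `i` has the cells `(i, i)`, labelled `false`, and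
`(i, i + 1)`, labelled `true`. -/
def cycleColumn {n : ℕ} [NeZero n] (i : Fin n) (b : Bool) : Fin n :=
  if b then i + 1 else i

theorem nonAttacking_cycleColumn_iff {n : ℕ} [NeZero n] (c : Fin n → Option Bool) :
    (NonAttacking fun i => (c i).map (cycleColumn i)) ↔
      ∀ i, c i = some true → c (i + 1) ≠ some false := by
  constructor
  · intro h i hi hi'
    have hfix : i = i + 1 := @h i (i + 1) (i + 1) (by simp [hi, cycleColumn])
      (by simp [hi', cycleColumn])
    simp [← hfix, hi] at hi'
  · intro h i i' j hi hi'
    obtain ⟨b, hb, rfl⟩ := Option.mem_map.mp hi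
    obtain ⟨b', hb', heq⟩ := Option.mem_map.mp hi'
    cases b <;> cases b' <;> simp only [cycleColumn, Bool.false_eq_true, if_true, if_false] at heq
    · exact heq.symm
    · exact absurd (heq ▸ hb) (h i' hb')
    · exact absurd (heq ▸ hb') (h i hb)
    · exact (add_right_cancel heq).symm

variable (R : Type*) [CommRing R]

/-- The transfer matrix of the board of `I + P`: its states are the choices available in a row, its
entries carry the weight of the current choice and vanish when the next row is attacked. -/
noncomputable def cycleTransfer : Matrix (Option Bool) (Option Bool) R[X] :=
  Matrix.of fun
    | none, _ => X
    | some true, some false => 0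
    | some _, _ => -1

theorem cycleTransfer_apply (a b : Option Bool) :
    cycleTransfer R a b =
      if a = some true → b ≠ some false then a.elim X fun _ => C (-1) else 0 := by
  rcases a with _ | _ | _ <;> rcases b with _ | _ | _ <;> simp [cycleTransfer]

theorem rookPolynomial_cycleColumn_eq_trace (m : ℕ) :
    rookPolynomial (cycleColumn (n := m + 1)) (fun _ _ => (-1 : R)) =
      (cycleTransfer R ^ (m + 1)).trace := by
  simp_rw [trace_pow_eq_sum_closed_walks, rookPolynomial, sum_filter, cycleTransfer_apply,
    Fintype.prod_ite_zero]
  refine sum_congr rfl fun c _ => ?_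
  congr! 1
  exact nonAttacking_cycleColumn_iff c

theorem cycleTransfer_pow_three :
    cycleTransfer R ^ 3 = (X - 2 : R[X]) • cycleTransfer R ^ 2 - cycleTransfer R := by
  ext1 a b
  rcases a with _ | _ | _ <;> rcases b with _ | _ | _ <;>
    simp only [pow_succ, pow_zero, one_mul, Matrix.sub_apply, Matrix.smul_apply, Matrix.mul_apply,
      Fintype.sum_option, Fintype.sum_bool, smul_eq_mul, cycleTransfer, Matrix.of_apply] <;>
    ring

theorem trace_cycleTransfer_pow (m : ℕ) :
    (cycleTransfer R ^ (m + 1)).trace = (Chebyshev.C R (m + 1)).comp (X - 2) := by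
  induction m using Nat.twoStepInduction with
  | zero =>
    simp only [Nat.cast_zero, zero_add, pow_one, Chebyshev.C_one, X_comp, Matrix.trace,
      Matrix.diag_apply, Fintype.sum_option, Fintype.sum_bool, cycleTransfer, Matrix.of_apply]
    ring
  | one =>
    simp only [Nat.cast_one, one_add_one_eq_two, Chebyshev.C_two, sub_comp, mul_comp, X_comp,
      ofNat_comp, Nat.cast_ofNat, Matrix.trace, Matrix.diag_apply, pow_two, Matrix.mul_apply,
      Fintype.sum_option, Fintype.sum_bool, cycleTransfer, Matrix.of_apply]
    ring
  | more m ih₁ ih₂ =>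
    have hrec : cycleTransfer R ^ (m + 3) =
        (X - 2 : R[X]) • cycleTransfer R ^ (m + 2) - cycleTransfer R ^ (m + 1) := by
      rw [pow_add, cycleTransfer_pow_three, mul_sub, Matrix.mul_smul, ← pow_add, ← pow_succ]
    have hcast : ((m + 2 : ℕ) : ℤ) + 1 = m + 1 + 2 := by push_cast; ring
    rw [hrec, Matrix.trace_sub, Matrix.trace_smul, ih₁, ih₂, hcast, Chebyshev.C_add_two]
    simp

end CycleBoard

theorem Jmat_sub_one_sub_Pmat_eq (n : ℕ) [NeZero n] :
    Jmat n - 1 - Pmat n =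
      Matrix.of fun i j => 1 + ∑ b, if j = cycleColumn i b then (-1 : ℤ) else 0 := by
  ext i j
  have hsucc : j.1 = (i.1 + 1) % n ↔ j = i + 1 := by simp [Fin.ext_iff, Fin.val_add]
  simp only [Jmat, Pmat, cycleColumn, Matrix.sub_apply, Matrix.of_apply, Matrix.one_apply, hsucc,
    Fintype.sum_bool, eq_comm (a := i)]
  split_ifs <;> simp_all

theorem permanent_Jmat_sub_one_sub_Pmat {n : ℕ} (hn : n ≠ 0) :
    (Jmat n - 1 - Pmat n).permanent =
      factorialFunctional ℤ ((Chebyshev.C ℤ n).comp (X - 2)) := by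
  obtain ⟨m, rfl⟩ := Nat.exists_eq_succ_of_ne_zero hn
  rw [Jmat_sub_one_sub_Pmat_eq, permanent_one_add_sum_ite, rookPolynomial_cycleColumn_eq_trace,
    trace_cycleTransfer_pow]
  push_cast
  rfl

/-- **Cayley's recursion.**  With `H_n = per(J_n - I - P)` one has `H_2 = 0`, `H_3 = 1`, and
`(n-2)·H_n = n(n-2)·H_{n-1} + n·H_{n-2} + 4·(-1)^{n+1}` for every `n ≥ 4`. -/
theorem cayley_recursion :
    (Jmat 2 - 1 - Pmat 2).permanent = 0 ∧
    (Jmat 3 - 1 - Pmat 3).permanent = 1 ∧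
    ∀ n : ℕ, 4 ≤ n →
      ((n : ℤ) - 2) * (Jmat n - 1 - Pmat n).permanent =
        (n : ℤ) * ((n : ℤ) - 2) * (Jmat (n - 1) - 1 - Pmat (n - 1)).permanent +
          (n : ℤ) * (Jmat (n - 2) - 1 - Pmat (n - 2)).permanent + 4 * (-1 : ℤ) ^ (n + 1) := by
  refine ⟨by decide, by decide, fun n hn => ?_⟩
  have hrec := factorialFunctional_chebyshev_C_recursion ℤ n
  have hsign : ((n : ℤ).negOnePow : ℤ) = (-1) ^ n := by simp [Int.negOnePow]
  rw [permanent_Jmat_sub_one_sub_Pmat (by lia), permanent_Jmat_sub_one_sub_Pmat (by lia),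
    permanent_Jmat_sub_one_sub_Pmat (by lia), Nat.cast_sub (by lia), Nat.cast_sub (by lia)]
  simp only [Int.cast_id, hsign] at hrec
  push_cast
  linear_combination hrec
end

section
/- Let M be an n×n matrix with all entries 0 or 1. Then per(J_n − M) = Σ_{j=0}^{n} (−1)^j · ν_j(M) · (n−j)!. -/
open Finset

/-!
Writing `J - M = J + (-M)` and expanding each product `∏ i, (1 - M (σ i) i)` turns the permanent
into a sum over pairs of a permutation `σ` and a subset `S` of its graph, with weight
`∏ p ∈ S, -M p.1 p.2`. A set `S` of positions lies in some permutation graph only if it is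
non-attacking, and then it lies in exactly `(n - #S)!` of them: the permutations extending `S` are
the bijections between the columns and the rows not met by `S`. Collecting the sets `S` by
cardinality gives the rook sum.
-/

open scoped Nat

section Placements

variable {α β : Type*}

/-- A placement `S` of rooks on an `α × β` board is non-attacking if no two of its rooks share a
row (first coordinate) or a column (second coordinate). -/
def IsNonattacking (S : Finset (α × β)) : Prop :=
  Set.InjOn Prod.fst (S : Set (α × β)) ∧ Set.InjOn Prod.snd (S : Set (α × β))

lemma isNonattacking_iff {S : Finset (α × β)} :
    IsNonattacking S ↔ ∀ p ∈ S, ∀ q ∈ S, p ≠ q → p.1 ≠ q.1 ∧ p.2 ≠ q.2 := by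
  simp only [IsNonattacking, Set.InjOn, SetLike.mem_coe]
  grind

instance [DecidableEq α] [DecidableEq β] : DecidablePred (IsNonattacking (α := α) (β := β)) :=
  fun _ => decidable_of_iff' _ isNonattacking_iff

lemma IsNonattacking.mono {S T : Finset (α × β)} (hT : IsNonattacking T) (hST : S ⊆ T) :
    IsNonattacking S :=
  ⟨hT.1.mono (mod_cast hST), hT.2.mono (mod_cast hST)⟩

lemma IsNonattacking.card_le [Fintype β] {S : Finset (α × β)} (hS : IsNonattacking S) :
    #S ≤ Fintype.card β :=
  card_le_card_of_injOn Prod.snd (fun _ _ => mem_univ _) hS.2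

/-- The full rook placement given by a bijection `σ` from columns to rows: the rook in column `b`
stands in row `σ b`, matching the convention `∏ i, M (σ i) i` of `Matrix.permanent`. -/
def equivPlacement [Fintype β] (σ : β ≃ α) : Finset (α × β) :=
  univ.map ⟨fun b => (σ b, b), fun _ _ h => (Prod.ext_iff.1 h).2⟩

lemma prod_equivPlacement {R : Type*} [CommMonoid R] [Fintype β] (σ : β ≃ α) (f : α × β → R) :
    ∏ p ∈ equivPlacement σ, f p = ∏ b, f (σ b, b) :=
  prod_map _ _ _

lemma mem_equivPlacement [Fintype β] {σ : β ≃ α} {p : α × β} :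
    p ∈ equivPlacement σ ↔ σ p.2 = p.1 := by
  rw [equivPlacement, mem_map]
  constructor
  · rintro ⟨b, -, rfl⟩
    rfl
  · exact fun h => ⟨p.2, mem_univ _, Prod.ext h rfl⟩

lemma subset_equivPlacement_iff [Fintype β] {S : Finset (α × β)} {σ : β ≃ α} :
    S ⊆ equivPlacement σ ↔ ∀ p ∈ S, σ p.2 = p.1 := by
  simp only [subset_iff, mem_equivPlacement]

lemma isNonattacking_equivPlacement [Fintype β] (σ : β ≃ α) :
    IsNonattacking (equivPlacement σ) := by
  refine isNonattacking_iff.2 fun p hp q hq => ?_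
  rw [mem_equivPlacement] at hp hq
  grind [σ.injective.eq_iff]

lemma card_equiv_extending [Fintype α] [Fintype β] (h : Fintype.card α = Fintype.card β)
    {s : Set α} {t : Set β} (e : s ≃ t) :
    Nat.card {σ : α ≃ β // ∀ x : s, σ x = e x} = (Fintype.card α - Nat.card s)! := by
  classical
  have hcompl : Fintype.card ↥sᶜ = Fintype.card ↥tᶜ := by
    rw [Fintype.card_compl_set, Fintype.card_compl_set, h, Fintype.card_congr e]
  rw [Nat.card_congr (Equiv.Set.compl e), Nat.card_eq_fintype_card,
    Fintype.card_equiv (Fintype.equivOfCardEq hcompl), Fintype.card_compl_set,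
    Nat.card_eq_fintype_card]

lemma IsNonattacking.card_filter_subset_equivPlacement [Fintype α] [Fintype β] [DecidableEq α]
    [DecidableEq β] {S : Finset (α × β)} (hS : IsNonattacking S)
    (h : Fintype.card β = Fintype.card α) :
    #{σ : β ≃ α | S ⊆ equivPlacement σ} = (Fintype.card β - #S)! := by
  let cols := Equiv.Set.imageOfInjOn Prod.snd (S : Set (α × β)) hS.2
  let rows := Equiv.Set.imageOfInjOn Prod.fst (S : Set (α × β)) hS.1
  have hext (σ : β ≃ α) :
      S ⊆ equivPlacement σ ↔ ∀ x : Prod.snd '' (S : Set (α × β)), σ x = cols.symm.trans rows x := by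
    rw [subset_equivPlacement_iff, ← cols.forall_congr_right]
    simp only [Equiv.trans_apply, Equiv.symm_apply_apply]
    exact (Subtype.forall (p := (· ∈ S)) (q := fun p => σ p.1.2 = p.1.1)).symm
  have hcard : Nat.card (Prod.snd '' (S : Set (α × β))) = #S := by
    rw [← Nat.card_congr cols, Nat.card_coe_set_eq, Set.ncard_coe_finset]
  rw [← Fintype.card_subtype, ← Nat.card_eq_fintype_card,
    Nat.card_congr (Equiv.subtypeEquivRight hext), card_equiv_extending h, hcard]

end Placements

section WeightedRookNumbers

variable {α β R : Type*} [Fintype α] [Fintype β] [DecidableEq α] [DecidableEq β]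

/-- The `j`-th weighted rook number of `A`: the sum, over all non-attacking placements of `j`
rooks, of the product of the entries of `A` they occupy. For a `(0,1)`-matrix it is `ν_j(A)`. -/
def weightedRookNum [CommSemiring R] (A : Matrix α β R) (j : ℕ) : R :=
  ∑ S : Finset (α × β) with IsNonattacking S ∧ #S = j, ∏ p ∈ S, A p.1 p.2

lemma weightedRookNum_neg [CommRing R] (A : Matrix α β R) (j : ℕ) :
    weightedRookNum (-A) j = (-1) ^ j * weightedRookNum A j := by
  simp only [weightedRookNum, mul_sum]
  refine sum_congr rfl fun S hS => ?_
  obtain ⟨-, -, rfl⟩ := mem_filter.1 hS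
  exact prod_neg _

lemma weightedRookNum_eq_rookNum {M : Matrix α β ℤ} (hM : ∀ i j, M i j = 0 ∨ M i j = 1) (j : ℕ) :
    weightedRookNum M j = rookNum M j := by
  have hprod (S : Finset (α × β)) :
      ∏ p ∈ S, M p.1 p.2 = if ∀ p ∈ S, M p.1 p.2 = 1 then 1 else 0 := by
    split_ifs with h
    · exact prod_eq_one h
    · push Not at h
      obtain ⟨p, hp, hne⟩ := h
      exact prod_eq_zero hp ((hM p.1 p.2).resolve_right hne)
  simp only [weightedRookNum, rookNum, hprod, sum_boole, filter_filter]
  congr 2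
  ext S
  simp only [mem_filter, mem_univ, true_and, mem_powersetCard, subset_univ, isNonattacking_iff]
  grind

variable [CommSemiring R]

lemma permanent_of_one_add_eq_sum_isNonattacking (A : Matrix α α R) :
    (Matrix.of 1 + A).permanent =
      ∑ S : Finset (α × α) with IsNonattacking S,
        (∏ p ∈ S, A p.1 p.2) * (Fintype.card α - #S)! := by
  calc (Matrix.of 1 + A).permanent
      = ∑ σ : Equiv.Perm α, ∑ S ∈ (equivPlacement σ).powerset, ∏ p ∈ S, A p.1 p.2 :=
        sum_congr rfl fun σ _ =>
          (prod_equivPlacement σ fun p => 1 + A p.1 p.2).symm.trans (prod_one_add _)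
    _ = ∑ S with IsNonattacking S, ∑ σ : Equiv.Perm α with S ⊆ equivPlacement σ,
          ∏ p ∈ S, A p.1 p.2 := by
        refine sum_comm' fun σ S => ?_
        simpa using (isNonattacking_equivPlacement σ).mono
    _ = ∑ S with IsNonattacking S, (∏ p ∈ S, A p.1 p.2) * (Fintype.card α - #S)! := by
        refine sum_congr rfl fun S hS => ?_
        rw [sum_const, (mem_filter.1 hS).2.card_filter_subset_equivPlacement rfl, nsmul_eq_mul,
          mul_comm]

lemma permanent_of_one_add_eq_sum_weightedRookNum (A : Matrix α α R) :
    (Matrix.of 1 + A).permanent =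
      ∑ j ∈ range (Fintype.card α + 1), weightedRookNum A j * (Fintype.card α - j)! := by
  have hcard : ∀ S ∈ ({S | IsNonattacking S} : Finset (Finset (α × α))),
      #S ∈ range (Fintype.card α + 1) :=
    fun S hS => mem_range_succ_iff.2 (mem_filter.1 hS).2.card_le
  rw [permanent_of_one_add_eq_sum_isNonattacking, ← sum_fiberwise_of_maps_to hcard]
  refine sum_congr rfl fun j _ => ?_
  rw [weightedRookNum, sum_mul, filter_filter]
  refine sum_congr rfl fun S hS => ?_
  rw [(mem_filter.1 hS).2.2]

end WeightedRookNumbers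

theorem permanent_complement_eq_rook_sum_general {α : Type*} [Fintype α] [DecidableEq α]
    (M : Matrix α α ℤ) (hM : ∀ i j, M i j = 0 ∨ M i j = 1) :
    (Matrix.of 1 - M).permanent =
      ∑ j ∈ range (Fintype.card α + 1), (-1 : ℤ) ^ j * rookNum M j * (Fintype.card α - j)! := by
  simp only [sub_eq_add_neg, permanent_of_one_add_eq_sum_weightedRookNum, weightedRookNum_neg,
    weightedRookNum_eq_rookNum hM]

/-- For an `n × n` `(0,1)`-matrix `M`,
`per(J_n - M) = ∑_{j=0}^{n} (-1)^j · ν_j(M) · (n-j)!`. -/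
theorem permanent_complement_eq_rook_sum (n : ℕ) (M : Matrix (Fin n) (Fin n) ℤ)
    (hM : ∀ i j, M i j = 0 ∨ M i j = 1) :
    (Jmat n - M).permanent =
      ∑ j ∈ Finset.range (n + 1),
        (-1 : ℤ) ^ j * (rookNum M j : ℤ) * (Nat.factorial (n - j) : ℤ) := by
  rw [show Jmat n = Matrix.of 1 from rfl]
  simpa using permanent_complement_eq_rook_sum_general M hM
end

section
/- For every integer n ≥ 3 and every r with 3 ≤ r ≤ n, per((J_n − I − P)[1|r]) = per((J_n − I − P)[1|n−r+3]). -/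
open Finset

/-!
In cyclic indexing modulo `n`, the substitution `(i, j) ↦ (-i, 1 - j)` swaps the support `j = i` of
`I` with the support `j = i + 1` of `P`, so it leaves `J - I - P` unchanged. It carries the minor
`[a|b]` to the minor `[-a|1 - b]` up to permutations of rows and columns, which do not affect the
permanent. Counting from `0`, row `0` is fixed and column `r - 1` goes to `2 - r ≡ n - r + 2`.
-/

/-- The permutation of `Fin n` induced by `σ` on the indices other than `a`, the domain being
identified with `{x // x ≠ a}` and the codomain with `{x // x ≠ σ a}` in increasing order. It
describes how `σ` reorders the rows (or columns) of a minor. -/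
def deletePerm {n : ℕ} (σ : Equiv.Perm (Fin (n + 1))) (a : Fin (n + 1)) : Equiv.Perm (Fin n) :=
  let restriction : {x // x ≠ a} ≃ {x // x ≠ σ a} := σ.subtypeEquiv fun _ => σ.injective.ne_iff.symm
  ((finSuccAboveEquiv a).trans restriction).trans (finSuccAboveEquiv (σ a)).symm

theorem succAbove_deletePerm {n : ℕ} (σ : Equiv.Perm (Fin (n + 1))) (a : Fin (n + 1)) (i : Fin n) :
    (σ a).succAbove (deletePerm σ a i) = σ (a.succAbove i) := by
  have lift_to_subtype : finSuccAboveEquiv (σ a) (deletePerm σ a i) =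
      ⟨σ (a.succAbove i), σ.injective.ne (a.succAbove_ne i)⟩ :=
    Equiv.apply_symm_apply _ _
  exact congrArg Subtype.val lift_to_subtype

theorem permanent_submatrix_perm_succAbove {R : Type*} [CommSemiring R] {n : ℕ}
    (M : Matrix (Fin (n + 1)) (Fin (n + 1)) R) (σ τ : Equiv.Perm (Fin (n + 1)))
    (a b : Fin (n + 1)) :
    ((M.submatrix σ τ).submatrix a.succAbove b.succAbove).permanent =
      (M.submatrix (σ a).succAbove (τ b).succAbove).permanent := by
  have reorder : (M.submatrix σ τ).submatrix a.succAbove b.succAbove =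
      ((M.submatrix (σ a).succAbove (τ b).succAbove).submatrix (deletePerm σ a) id).submatrix
        id (deletePerm τ b) := by
    ext i j
    simp [succAbove_deletePerm]
  rw [reorder, Matrix.permanent_permute_rows, Matrix.permanent_permute_cols]

theorem skipIdx_eq_succAbove {n : ℕ} (a : Fin (n + 1)) (i : Fin n) :
    skipIdx (m := n + 1) a i = a.succAbove i := by
  simp only [skipIdx, Fin.succAbove, Fin.lt_def]
  rfl

theorem delRC_eq_submatrix_succAbove {n : ℕ} (M : Matrix (Fin (n + 1)) (Fin (n + 1)) ℤ)
    (a b : Fin (n + 1)) : delRC M a b = M.submatrix a.succAbove b.succAbove := by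
  ext i j
  simp only [delRC, Matrix.of_apply, Matrix.submatrix_apply]
  exact congrArg₂ M (skipIdx_eq_succAbove a i) (skipIdx_eq_succAbove b j)

theorem Pmat_apply {n : ℕ} (i j : Fin (n + 1)) :
    Pmat (n + 1) i j = if j = i + 1 then 1 else 0 := by
  simp [Pmat, Fin.ext_iff, Fin.val_add]

theorem one_submatrix_neg_subLeft (n : ℕ) :
    (1 : Matrix (Fin (n + 1)) (Fin (n + 1)) ℤ).submatrix (Equiv.neg _) (Equiv.subLeft 1) =
      Pmat (n + 1) := by
  ext i j
  have on_support : -i = 1 - j ↔ j = i + 1 := by grind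
  simp [Matrix.one_apply, Pmat_apply, on_support]

theorem Pmat_submatrix_neg_subLeft (n : ℕ) :
    (Pmat (n + 1)).submatrix (Equiv.neg _) (Equiv.subLeft 1) = 1 := by
  ext i j
  have on_support : 1 - j = -i + 1 ↔ i = j := by grind
  simp [Matrix.one_apply, Pmat_apply, on_support]

theorem Jmat_sub_one_sub_Pmat_submatrix_neg_subLeft (n : ℕ) :
    (Jmat (n + 1) - 1 - Pmat (n + 1)).submatrix (Equiv.neg _) (Equiv.subLeft 1) =
      Jmat (n + 1) - 1 - Pmat (n + 1) := by
  have Jmat_invariant :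
      (Jmat (n + 1)).submatrix (Equiv.neg _) (Equiv.subLeft 1) = Jmat (n + 1) := rfl
  rw [Matrix.submatrix_sub, Matrix.submatrix_sub, Pi.sub_apply, Pi.sub_apply, Pi.sub_apply,
    Pi.sub_apply, Jmat_invariant, one_submatrix_neg_subLeft, Pmat_submatrix_neg_subLeft,
    sub_right_comm]

theorem val_one_sub_of_two_le {n : ℕ} {b : Fin (n + 1)} (hb : 2 ≤ (b : ℕ)) :
    ((1 - b : Fin (n + 1)) : ℕ) = n + 2 - b := by
  have one_lt : 1 < n + 1 := by omega
  have no_wrap : n + 1 - (b : ℕ) + 1 < n + 1 := by omega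
  rw [Fin.val_sub, Fin.val_one', Nat.mod_eq_of_lt one_lt, Nat.mod_eq_of_lt no_wrap]
  omega

theorem permanent_minor_symmetry_general {n : ℕ} (a b : Fin (n + 1)) :
    (delRC (Jmat (n + 1) - 1 - Pmat (n + 1)) a b).permanent =
      (delRC (Jmat (n + 1) - 1 - Pmat (n + 1))
        (-a : Fin (n + 1)) (1 - b : Fin (n + 1))).permanent := by
  simp only [delRC_eq_submatrix_succAbove]
  conv_lhs => rw [← Jmat_sub_one_sub_Pmat_submatrix_neg_subLeft]
  exact permanent_submatrix_perm_succAbove _ (Equiv.neg _) (Equiv.subLeft 1) a b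

/-- The symmetry `per((J_n - I - P)[1|r]) = per((J_n - I - P)[1|n-r+3])` for `3 ≤ r ≤ n`. -/
theorem permanent_minor_symmetry (n r : ℕ) (hn : 3 ≤ n) (hr : 3 ≤ r) (hrn : r ≤ n) :
    (delRC (Jmat n - 1 - Pmat n) 0 (r - 1)).permanent =
      (delRC (Jmat n - 1 - Pmat n) 0 (n - r + 3 - 1)).permanent := by
  obtain ⟨m, rfl⟩ : ∃ m, n = m + 1 := ⟨n - 1, by omega⟩
  have reflected_col : ((1 - ⟨r - 1, by omega⟩ : Fin (m + 1)) : ℕ) = m + 1 - r + 3 - 1 :=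
    (val_one_sub_of_two_le (Nat.le_sub_one_of_lt hr)).trans (by dsimp only; omega)
  simpa [reflected_col] using permanent_minor_symmetry_general (n := m) 0 ⟨r - 1, by omega⟩
end

section
/- For every integer n ≥ 3 and every r with 3 ≤ r ≤ n, the rook numbers of the (n−1)×(n−1) matrix (I + P)[1|r] are given by: for every k with 0 ≤ k ≤ n−1, ν_k((I+P)[1|r]) = Σ_{i=0}^{min(k, r−2)} C(2r−i−4, i) · C(2(n−r)−k+i+2, k−i). -/
/-!
Rook placements are independent sets of the rook's graph. Under rook moves the `2n` ones of `I + P`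
form a single cycle. Deleting row `1` removes two consecutive cells and leaves a path, and deleting
column `r` removes two consecutive cells again, leaving two paths that no rook move joins (the first
is empty if `r = 2`). A path on `m` vertices has `C(m - k + 1, k)` independent sets of size `k`, so
`ν_k` is the convolution of these counts for the two paths.
-/

open Finset

section IndepSubsets

variable {V W : Type*} {G : SimpleGraph V}

open Classical in
/-- The `k`-element independent sets of the graph `G` that are contained in `T`. -/
noncomputable def indepSubsets (G : SimpleGraph V) (T : Finset V) (k : ℕ) : Finset (Finset V) :=
  {S ∈ T.powerset | G.IsNIndepSet k S}

lemma mem_indepSubsets {S T : Finset V} {k : ℕ} :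
    S ∈ indepSubsets G T k ↔ S ⊆ T ∧ G.IsNIndepSet k S := by
  simp [indepSubsets]

@[simp]
lemma card_indepSubsets_zero (G : SimpleGraph V) (T : Finset V) : #(indepSubsets G T 0) = 1 := by
  rw [card_eq_one]
  refine ⟨∅, ?_⟩
  ext S
  simp only [mem_indepSubsets, SimpleGraph.isNIndepSet_iff, card_eq_zero, mem_singleton]
  exact ⟨fun h ↦ h.2.2, by rintro rfl; simp⟩

@[simp]
lemma indepSubsets_empty_succ (G : SimpleGraph V) (k : ℕ) : indepSubsets G ∅ (k + 1) = ∅ := by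
  ext S
  simp +contextual [mem_indepSubsets, SimpleGraph.isNIndepSet_iff]

lemma isNIndepSet_image_iff [DecidableEq W] {H : SimpleGraph W} {S : Finset V} {f : V → W}
    (hf : Set.InjOn f S) (hadj : ∀ v ∈ S, ∀ w ∈ S, H.Adj (f v) (f w) ↔ G.Adj v w) {k : ℕ} :
    H.IsNIndepSet k (S.image f) ↔ G.IsNIndepSet k S := by
  rw [SimpleGraph.isNIndepSet_iff, SimpleGraph.isNIndepSet_iff, card_image_of_injOn hf,
    SimpleGraph.isIndepSet_iff, coe_image, hf.pairwise_image]
  exact and_congr_left fun _ ↦ forall₂_congr fun v hv ↦ forall₂_congr fun w hw ↦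
    forall_congr' fun _ ↦ not_congr (hadj v hv w hw)

lemma card_indepSubsets_image [DecidableEq W] {H : SimpleGraph W} {T : Finset V} {f : V → W}
    (hf : Set.InjOn f T) (hadj : ∀ v ∈ T, ∀ w ∈ T, H.Adj (f v) (f w) ↔ G.Adj v w) (k : ℕ) :
    #(indepSubsets H (T.image f) k) = #(indepSubsets G T k) := by
  have himage {S : Finset V} (hS : S ⊆ T) :
      H.IsNIndepSet k (S.image f) ↔ G.IsNIndepSet k S :=
    isNIndepSet_image_iff (hf.mono hS) fun v hv w hw ↦ hadj v (hS hv) w (hS hw)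
  have hsets : indepSubsets H (T.image f) k = (indepSubsets G T k).image (image f) := by
    ext R
    simp only [mem_indepSubsets, mem_image, subset_image_iff]
    constructor
    · rintro ⟨⟨S, hS, rfl⟩, hR⟩
      exact ⟨S, ⟨hS, (himage hS).1 hR⟩, rfl⟩
    · rintro ⟨S, ⟨hS, hindep⟩, rfl⟩
      exact ⟨⟨S, hS, rfl⟩, (himage hS).2 hindep⟩
  rw [hsets, card_image_of_injOn]
  exact (image_injOn_powerset_of_injOn hf).mono fun S hS ↦
    mem_powerset.2 (mem_indepSubsets.1 hS).1

lemma isNIndepSet_insert_iff [DecidableEq V] {v : V} {S : Finset V} (hv : v ∉ S) {k : ℕ} :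
    G.IsNIndepSet (k + 1) (insert v S) ↔ G.IsNIndepSet k S ∧ ∀ w ∈ S, ¬G.Adj v w := by
  have : Std.Symm fun v w ↦ ¬G.Adj v w := ⟨fun _ _ ↦ mt SimpleGraph.Adj.symm⟩
  rw [SimpleGraph.isNIndepSet_iff, SimpleGraph.isNIndepSet_iff, SimpleGraph.isIndepSet_iff,
    coe_insert, Set.pairwise_insert_of_symm_of_notMem (mod_cast hv), card_insert_of_notMem hv,
    Nat.add_right_cancel_iff, and_right_comm]
  rfl

lemma card_indepSubsets_insert_succ [DecidableEq V] [DecidableRel G.Adj] {v : V} {T : Finset V}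
    (hv : v ∉ T) (k : ℕ) :
    #(indepSubsets G (insert v T) (k + 1)) =
      #(indepSubsets G T (k + 1)) + #(indepSubsets G {w ∈ T | ¬G.Adj v w} k) := by
  have hnotMem {S : Finset V} (hS : S ⊆ T) : v ∉ S := fun h ↦ hv (hS h)
  have hsets : indepSubsets G (insert v T) (k + 1) = indepSubsets G T (k + 1) ∪
      (indepSubsets G {w ∈ T | ¬G.Adj v w} k).image (insert v) := by
    ext S
    simp only [mem_union, mem_image, mem_indepSubsets]
    constructor
    · rintro ⟨hST, hindep⟩
      by_cases hvS : v ∈ S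
      · rw [← insert_erase hvS, isNIndepSet_insert_iff (notMem_erase v S)] at hindep
        exact .inr ⟨S.erase v, ⟨fun w hw ↦ mem_filter.2 ⟨subset_insert_iff.1 hST hw,
          hindep.2 w hw⟩, hindep.1⟩, insert_erase hvS⟩
      · exact .inl ⟨(subset_insert_iff_of_notMem hvS).1 hST, hindep⟩
    · rintro (⟨hST, hindep⟩ | ⟨R, ⟨hRT, hindep⟩, rfl⟩)
      · exact ⟨hST.trans (subset_insert v T), hindep⟩
      · have hRT' : R ⊆ T := hRT.trans (filter_subset _ T)
        exact ⟨insert_subset_insert v hRT', (isNIndepSet_insert_iff (hnotMem hRT')).2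
          ⟨hindep, fun w hw ↦ (mem_filter.1 (hRT hw)).2⟩⟩
  rw [hsets, card_union_of_disjoint, card_image_of_injOn]
  · exact insert_erase_invOn.2.injOn.mono fun S hS ↦
      hnotMem ((mem_indepSubsets.1 hS).1.trans (filter_subset _ T))
  · refine disjoint_left.2 fun S hS hS' ↦ ?_
    obtain ⟨R, -, rfl⟩ := mem_image.1 hS'
    exact hnotMem (mem_indepSubsets.1 hS).1 (mem_insert_self v R)

lemma isNIndepSet_union [DecidableEq V] {S R : Finset V} {i j : ℕ} (hdisj : Disjoint S R)
    (hadj : ∀ v ∈ S, ∀ w ∈ R, ¬G.Adj v w) (hS : G.IsNIndepSet i S) (hR : G.IsNIndepSet j R) :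
    G.IsNIndepSet (i + j) (S ∪ R) := by
  have : Std.Symm fun v w ↦ ¬G.Adj v w := ⟨fun _ _ ↦ mt SimpleGraph.Adj.symm⟩
  constructor
  · rw [SimpleGraph.isIndepSet_iff, coe_union, Set.pairwise_union_of_symm]
    exact ⟨hS.1, hR.1, fun v hv w hw _ ↦ hadj v hv w hw⟩
  · rw [card_union_of_disjoint hdisj, hS.2, hR.2]

lemma card_filter_indepSubsets_union [DecidableEq V] {T U : Finset V} (hdisj : Disjoint T U)
    (hadj : ∀ v ∈ T, ∀ w ∈ U, ¬G.Adj v w) (i j : ℕ) :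
    #{S ∈ indepSubsets G (T ∪ U) (i + j) | (#(S ∩ T), #(S ∩ U)) = (i, j)} =
      #(indepSubsets G T i) * #(indepSubsets G U j) := by
  have hinter {A B : Finset V} (hA : A ⊆ T) (hB : B ⊆ U) :
      (A ∪ B) ∩ T = A ∧ (A ∪ B) ∩ U = B := by
    rw [union_inter_distrib_right A, union_inter_distrib_right A, inter_eq_left.2 hA,
      inter_eq_left.2 hB, disjoint_iff_inter_eq_empty.1 (hdisj.mono_left hA),
      disjoint_iff_inter_eq_empty.1 (hdisj.symm.mono_left hB), union_empty, empty_union]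
    exact ⟨rfl, rfl⟩
  rw [← card_product]
  refine card_nbij' (fun S ↦ (S ∩ T, S ∩ U)) (fun AB ↦ AB.1 ∪ AB.2) ?_ ?_ ?_ ?_
  · intro S hS
    simp only [mem_coe, mem_filter, mem_indepSubsets, Prod.mk.injEq] at hS
    obtain ⟨⟨-, hindep⟩, hi, hj⟩ := hS
    simp only [mem_coe, mem_product, mem_indepSubsets]
    exact ⟨⟨inter_subset_right, hindep.1.mono (coe_subset.2 inter_subset_left), hi⟩,
      ⟨inter_subset_right, hindep.1.mono (coe_subset.2 inter_subset_left), hj⟩⟩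
  · rintro ⟨A, B⟩ hAB
    simp only [mem_coe, mem_product, mem_indepSubsets] at hAB
    obtain ⟨⟨hA, hiA⟩, hB, hiB⟩ := hAB
    simp only [mem_coe, mem_filter, mem_indepSubsets, hinter hA hB, hiA.card_eq, hiB.card_eq,
      and_true]
    exact ⟨union_subset_union hA hB, isNIndepSet_union (hdisj.mono hA hB)
      (fun v hv w hw ↦ hadj v (hA hv) w (hB hw)) hiA hiB⟩
  · intro S hS
    have hST : S ⊆ T ∪ U := (mem_indepSubsets.1 (mem_filter.1 hS).1).1
    exact (inter_union_distrib_left S T U).symm.trans (inter_eq_left.2 hST)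
  · rintro ⟨A, B⟩ hAB
    simp only [mem_coe, mem_product, mem_indepSubsets] at hAB
    exact Prod.ext (hinter hAB.1.1 hAB.2.1).1 (hinter hAB.1.1 hAB.2.1).2

lemma card_indepSubsets_union [DecidableEq V] {T U : Finset V} (hdisj : Disjoint T U)
    (hadj : ∀ v ∈ T, ∀ w ∈ U, ¬G.Adj v w) (k : ℕ) :
    #(indepSubsets G (T ∪ U) k) =
      ∑ ij ∈ antidiagonal k, #(indepSubsets G T ij.1) * #(indepSubsets G U ij.2) := by
  have hcard {S : Finset V} (hS : S ∈ indepSubsets G (T ∪ U) k) :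
      (#(S ∩ T), #(S ∩ U)) ∈ antidiagonal k := by
    rw [mem_indepSubsets] at hS
    rw [HasAntidiagonal.mem_antidiagonal, ← card_union_of_disjoint
      (hdisj.mono inter_subset_right inter_subset_right), ← inter_union_distrib_left,
      inter_eq_left.2 hS.1, hS.2.card_eq]
  rw [card_eq_sum_card_fiberwise fun S hS ↦ hcard hS]
  refine sum_congr rfl fun ⟨i, j⟩ hij ↦ ?_
  rw [← HasAntidiagonal.mem_antidiagonal.1 hij]
  exact card_filter_indepSubsets_union hdisj hadj i j

lemma choose_sub_succ (m k : ℕ) :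
    (m + 1 - k).choose (k + 1) = (m - k).choose (k + 1) + (m - 1 + 1 - k).choose k := by
  rcases le_or_gt k m with hk | hk
  · rw [Nat.succ_sub hk, Nat.choose_succ_succ, add_comm]
    rcases m with _ | m
    · simp [Nat.le_zero.1 hk]
    · simp
  · rw [Nat.choose_eq_zero_of_lt, Nat.choose_eq_zero_of_lt, Nat.choose_eq_zero_of_lt] <;> lia

open SimpleGraph in
lemma card_indepSubsets_hasse_Ico (a b k : ℕ) :
    #(indepSubsets (hasse ℕ) (Ico a b) k) = (b + 1 - a - k).choose k := by
  classical
  suffices h : ∀ m k, #(indepSubsets (hasse ℕ) (Ico a (a + m)) k) = (m + 1 - k).choose k by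
    rcases le_or_gt a b with hab | hba
    · rw [Nat.sub_add_comm hab, ← h, Nat.add_sub_cancel' hab]
    · rw [Nat.sub_eq_zero_of_le hba, Ico_eq_empty_of_le hba.le]
      cases k <;> simp
  intro m
  induction m using Nat.strong_induction_on with
  | _ m ih =>
    rintro (_ | k)
    · simp
    obtain _ | m := m
    · simp
    have hinsert : Ico a (a + (m + 1)) = insert (a + m) (Ico a (a + m)) := by
      ext t; simp only [mem_Ico, mem_insert]; lia
    have hnonadj : {t ∈ Ico a (a + m) | ¬(hasse ℕ).Adj (a + m) t} = Ico a (a + (m - 1)) := by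
      ext t
      simp only [mem_filter, mem_Ico, hasse_adj, Order.covBy_iff_add_one_eq]
      lia
    rw [hinsert, card_indepSubsets_insert_succ (by simp), hnonadj, ih m (by lia),
      ih (m - 1) (by lia), Nat.add_sub_add_right, Nat.add_sub_add_right, choose_sub_succ]

end IndepSubsets

section RookNum

open SimpleGraph

/-- The graph on the positions of an `α × β` board in which two positions are adjacent when rooks
on them attack each other. -/
abbrev rookGraph (α β : Type*) : SimpleGraph (α × β) := (⊤ : SimpleGraph α) □ (⊤ : SimpleGraph β)

lemma rookNum_eq_card_indepSubsets {α β : Type*} [Fintype α] [Fintype β] [DecidableEq α]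
    [DecidableEq β] (M : Matrix α β ℤ) (k : ℕ) :
    rookNum M k =
      #(indepSubsets (rookGraph α β) {p | M p.1 p.2 = 1} k) := by
  rw [rookNum]
  congr 1
  ext S
  simp only [mem_filter, mem_powersetCard, true_and, mem_indepSubsets,
    isNIndepSet_iff, isIndepSet_iff, Set.Pairwise, boxProd_adj, top_adj, subset_iff, mem_univ,
    mem_coe, ne_eq, Prod.ext_iff]
  grind

lemma skipIdx_val {m : ℕ} (a : ℕ) (i : Fin (m - 1)) :
    (skipIdx a i).1 = if i.1 < a then i.1 else i.1 + 1 := by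
  rw [skipIdx]
  split_ifs <;> rfl

lemma skipIdx_injective {m : ℕ} (a : ℕ) :
    Function.Injective (skipIdx a : Fin (m - 1) → Fin m) := by
  intro i j hij
  rw [Fin.ext_iff, skipIdx_val, skipIdx_val] at hij
  rw [Fin.ext_iff]
  split_ifs at hij <;> lia

lemma exists_skipIdx_eq_iff {m a : ℕ} (ha : a < m) (j : Fin m) :
    (∃ i : Fin (m - 1), skipIdx a i = j) ↔ j.1 ≠ a := by
  simp only [Fin.ext_iff, skipIdx_val]
  constructor
  · rintro ⟨i, hi⟩
    split_ifs at hi <;> lia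
  · intro hj
    rcases Nat.lt_or_gt_of_ne hj with hlt | hgt
    · exact ⟨⟨j, by lia⟩, if_pos hlt⟩
    · exact ⟨⟨j - 1, by lia⟩, (if_neg (Nat.le_sub_one_of_lt hgt).not_gt).trans
        (Nat.sub_add_cancel (by lia))⟩

lemma rookNum_delRC {m a b : ℕ} (M : Matrix (Fin m) (Fin m) ℤ) (ha : a < m) (hb : b < m)
    (k : ℕ) :
    rookNum (delRC M a b) k =
      #(indepSubsets (rookGraph (Fin m) (Fin m))
        {p | M p.1 p.2 = 1 ∧ p.1.1 ≠ a ∧ p.2.1 ≠ b} k) := by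
  have himage : ({p | M p.1 p.2 = 1 ∧ p.1.1 ≠ a ∧ p.2.1 ≠ b} : Finset (Fin m × Fin m)) =
      ({p | delRC M a b p.1 p.2 = 1} : Finset _).image (Prod.map (skipIdx a) (skipIdx b)) := by
    ext ⟨i, j⟩
    simp only [mem_filter_univ, mem_image, ← exists_skipIdx_eq_iff ha,
      ← exists_skipIdx_eq_iff hb, Prod.exists, Prod.map_apply, Prod.mk.injEq]
    simp only [delRC, Matrix.of_apply]
    constructor
    · rintro ⟨hM, ⟨i, rfl⟩, j, rfl⟩
      exact ⟨i, j, hM, rfl, rfl⟩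
    · rintro ⟨i, j, hM, rfl, rfl⟩
      exact ⟨hM, ⟨i, rfl⟩, j, rfl⟩
  rw [rookNum_eq_card_indepSubsets, himage, card_indepSubsets_image]
  · exact ((skipIdx_injective a).prodMap (skipIdx_injective b)).injOn
  · rintro ⟨i, j⟩ - ⟨i', j'⟩ -
    simp only [boxProd_adj, top_adj, Prod.map_apply, ne_eq, (skipIdx_injective a).eq_iff,
      (skipIdx_injective b).eq_iff]

end RookNum

section Cycle

lemma one_add_Pmat_apply_eq_one_iff {n : ℕ} (hn : 2 ≤ n) (i j : Fin n) :
    (1 + Pmat n) i j = 1 ↔ j = i ∨ j.1 = (i.1 + 1) % n := by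
  have hne : (i.1 + 1) % n ≠ i.1 := by
    rcases Nat.lt_or_ge (i.1 + 1) n with hi | hi
    · rw [Nat.mod_eq_of_lt hi]; lia
    · rw [show i.1 + 1 = n by lia, Nat.mod_self]; lia
  rw [Matrix.add_apply, Matrix.one_apply, Pmat, Matrix.of_apply]
  split_ifs <;> grind

/-- The positions of the `1`-entries of `I + P`, listed along the cycle formed by the rook moves
between them: `cycleCell n (2 * i) = (i, i)` and `cycleCell n (2 * i + 1) = (i, i + 1)`, with
indices taken modulo `n`. -/
def cycleCell (n : ℕ) [NeZero n] (t : ℕ) : Fin n × Fin n :=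
  (Fin.ofNat n (t / 2), Fin.ofNat n ((t + 1) / 2))

variable {n : ℕ} [NeZero n]

lemma cycleCell_fst_eq_iff {s t : ℕ} (hs : s ∈ Ico 1 (2 * n)) (ht : t ∈ Ico 1 (2 * n)) :
    (cycleCell n s).1 = (cycleCell n t).1 ↔ s / 2 = t / 2 := by
  rw [mem_Ico] at hs ht
  rw [cycleCell, cycleCell, Fin.ext_iff, Fin.val_ofNat, Fin.val_ofNat, Nat.mod_eq_of_lt (by lia),
    Nat.mod_eq_of_lt (by lia)]

lemma cycleCell_snd_eq_iff {s t : ℕ} (hs : s ∈ Ico 1 (2 * n)) (ht : t ∈ Ico 1 (2 * n)) :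
    (cycleCell n s).2 = (cycleCell n t).2 ↔ (s + 1) / 2 = (t + 1) / 2 := by
  rw [mem_Ico] at hs ht
  rw [cycleCell, cycleCell, Fin.ext_iff, Fin.val_ofNat, Fin.val_ofNat]
  exact (Nat.mod_injOn_Ico 1 n).eq_iff (mem_coe.2 (mem_Ico.2 (by lia)))
    (mem_coe.2 (mem_Ico.2 (by lia)))

lemma cycleCell_injOn : Set.InjOn (cycleCell n) (Ico 1 (2 * n)) := by
  intro s hs t ht hst
  have hrow := (cycleCell_fst_eq_iff hs ht).1 (congrArg Prod.fst hst)
  have hcol := (cycleCell_snd_eq_iff hs ht).1 (congrArg Prod.snd hst)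
  lia

open SimpleGraph in
lemma rookGraph_adj_cycleCell_iff {s t : ℕ} (hs : s ∈ Ico 1 (2 * n)) (ht : t ∈ Ico 1 (2 * n)) :
    (rookGraph (Fin n) (Fin n)).Adj (cycleCell n s) (cycleCell n t) ↔
      (hasse ℕ).Adj s t := by
  rw [boxProd_adj, top_adj, top_adj, ne_eq, ne_eq, cycleCell_fst_eq_iff hs ht,
    cycleCell_snd_eq_iff hs ht, hasse_adj, Order.covBy_iff_add_one_eq,
    Order.covBy_iff_add_one_eq]
  lia

lemma image_cycleCell {c : ℕ} (hc : 1 ≤ c) (hcn : c < n) :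
    (Ico 2 (2 * c - 1) ∪ Ico (2 * c + 1) (2 * n)).image (cycleCell n) =
      ({p | (1 + Pmat n) p.1 p.2 = 1 ∧ p.1.1 ≠ 0 ∧ p.2.1 ≠ c} : Finset (Fin n × Fin n)) := by
  ext ⟨i, j⟩
  simp only [mem_image, mem_union, mem_Ico, mem_filter, mem_univ, true_and,
    one_add_Pmat_apply_eq_one_iff (show 2 ≤ n by lia), cycleCell, Prod.mk.injEq, Fin.ext_iff,
    Fin.val_ofNat]
  have hmod {q : ℕ} (hq : q < n) : (q + 1) % n = if q + 1 = n then 0 else q + 1 := by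
    split_ifs with h
    · rw [h, Nat.mod_self]
    · exact Nat.mod_eq_of_lt (by lia)
  constructor
  · rintro ⟨t, ht, hi, hj⟩
    rw [Nat.mod_eq_of_lt (by lia)] at hi
    obtain ⟨q, rfl | rfl⟩ := Nat.even_or_odd' t
    · rw [show (2 * q + 1) / 2 = q by lia, Nat.mod_eq_of_lt (by lia)] at hj
      exact ⟨.inl (by lia), by lia, by lia⟩
    · rw [show (2 * q + 1 + 1) / 2 = q + 1 by lia] at hj
      obtain rfl : q = i := by lia
      refine ⟨.inr hj.symm, by lia, ?_⟩
      rw [hmod i.isLt] at hj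
      split_ifs at hj <;> lia
  · rintro ⟨hj | hj, hi, hjc⟩
    · refine ⟨2 * i, by lia, ?_, ?_⟩
      · rw [Nat.mod_eq_of_lt (by lia)]; lia
      · rw [Nat.mod_eq_of_lt (by lia)]; lia
    · refine ⟨2 * i + 1, ?_, ?_, ?_⟩
      · rw [hmod i.isLt] at hj
        split_ifs at hj <;> lia
      · rw [Nat.mod_eq_of_lt (by lia)]; lia
      · rw [hj, show (2 * i.1 + 1 + 1) / 2 = i.1 + 1 by lia]

lemma rookNum_delRC_one_add_Pmat {c : ℕ} (hc : 1 ≤ c) (hcn : c < n) (k : ℕ) :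
    rookNum (delRC (1 + Pmat n) 0 c) k =
      ∑ ij ∈ antidiagonal k,
        (2 * c - 2 - ij.1).choose ij.1 * (2 * (n - c) - ij.2).choose ij.2 := by
  have hsub : Ico 2 (2 * c - 1) ∪ Ico (2 * c + 1) (2 * n) ⊆ Ico 1 (2 * n) := by
    intro t; simp only [mem_union, mem_Ico]; lia
  rw [rookNum_delRC _ (by lia) hcn, ← image_cycleCell hc hcn, card_indepSubsets_image
    (G := SimpleGraph.hasse ℕ) (cycleCell_injOn.mono (mod_cast hsub))
    fun s hs t ht ↦ rookGraph_adj_cycleCell_iff (hsub hs) (hsub ht), card_indepSubsets_union]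
  · refine sum_congr rfl fun ij _ ↦ ?_
    rw [card_indepSubsets_hasse_Ico, card_indepSubsets_hasse_Ico,
      show 2 * c - 1 + 1 - 2 = 2 * c - 2 by lia, show 2 * n + 1 - (2 * c + 1) = 2 * (n - c) by lia]
  · rw [disjoint_left]
    intro t
    simp only [mem_Ico]
    lia
  · intro s hs t ht
    rw [mem_Ico] at hs ht
    rw [SimpleGraph.hasse_adj, Order.covBy_iff_add_one_eq, Order.covBy_iff_add_one_eq]
    lia

end Cycle

lemma intChoose_natCast_sub (m b : ℕ) :
    intChoose ((m : ℤ) - b) b = ((m - b).choose b : ℕ) := by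
  rw [intChoose]
  split_ifs with h
  · rw [← Int.toNat_sub, Int.toNat_natCast]
  · rw [Nat.choose_eq_zero_of_lt (by lia), Nat.cast_zero]

theorem rookNum_IP_minor_general (n r : ℕ) (hr : 2 ≤ r) (hrn : r ≤ n) (k : ℕ) :
    (rookNum (delRC (1 + Pmat n) 0 (r - 1)) k : ℤ) =
      ∑ i ∈ Finset.range (min k (r - 2) + 1),
        intChoose (2 * (r : ℤ) - (i : ℤ) - 4) (i : ℤ) *
          intChoose (2 * ((n : ℤ) - (r : ℤ)) - (k : ℤ) + (i : ℤ) + 2) ((k : ℤ) - (i : ℤ)) := by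
  have : NeZero n := ⟨by lia⟩
  have hsub : range (min k (r - 2) + 1) ⊆ range (k + 1) := range_subset_range.2 (by lia)
  rw [rookNum_delRC_one_add_Pmat (by lia) (by lia), Nat.sum_antidiagonal_eq_sum_range_succ_mk,
    ← sum_subset hsub, Nat.cast_sum]
  · refine sum_congr rfl fun i hi ↦ ?_
    rw [mem_range] at hi
    rw [show 2 * (r : ℤ) - i - 4 = (2 * (r - 1) - 2 : ℕ) - i by lia,
      show (k : ℤ) - i = (k - i : ℕ) by lia,
      show 2 * ((n : ℤ) - r) - k + i + 2 = (2 * (n - (r - 1)) : ℕ) - (k - i : ℕ) by lia,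
      intChoose_natCast_sub, intChoose_natCast_sub, Nat.cast_mul]
  · intro i hik hi
    rw [mem_range] at hik hi
    rw [Nat.choose_eq_zero_of_lt (by lia), zero_mul]

/-- The rook numbers of the `(n-1) × (n-1)` matrix `(I + P)[1|r]`:  for `0 ≤ k ≤ n-1`,
`ν_k((I+P)[1|r]) = ∑_{i=0}^{min(k, r-2)} C(2r-i-4, i) · C(2(n-r)-k+i+2, k-i)`
(with `C(a,b) = 0` unless `0 ≤ b ≤ a`). -/
theorem rookNum_IP_minor (n r : ℕ) (hn : 3 ≤ n) (hr : 3 ≤ r) (hrn : r ≤ n)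
    (k : ℕ) (hk : k ≤ n - 1) :
    (rookNum (delRC (1 + Pmat n) 0 (r - 1)) k : ℤ) =
      ∑ i ∈ Finset.range (min k (r - 2) + 1),
        intChoose (2 * (r : ℤ) - (i : ℤ) - 4) (i : ℤ) *
          intChoose (2 * ((n : ℤ) - (r : ℤ)) - (k : ℤ) + (i : ℤ) + 2) ((k : ℤ) - (i : ℤ)) :=
  rookNum_IP_minor_general n r (by lia) hrn k
end

section
/- For every integer n ≥ 3, per((J_n − I − P)[1|3]) = Σ_{k=0}^{n−3} (−1)^k · C(2n−k−4, k) · (n−k−2)! · (n−k−2). -/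
open Finset

/-!
Regard the rows and columns of a matrix as vertices and its zeros as edges. The zeros of `J - I - P`
form a cycle of length `2n`, and deleting row `1` and column `3` leaves an isolated edge and a path
on `2n - 4` vertices. Raising an entry by `c` adds `c` times its minor to the permanent. Applied to
the last edge of a path, this shows that the permanent `p(n, l)` of the `n × n` matrix whose zeros
form a path on `l` vertices satisfies `p(n + 1, l + 2) = p(n + 1, l + 1) - p(n, l)`. Hence `p(n, l)`
is the sum of `(-1)^k C(l - k, k) (n - k)!`, where `C(l - k, k)` counts the `k`-edge matchings of
the path. Applied to the isolated edge, it gives `p(n - 1, 2n - 4) - p(n - 2, 2n - 4)`.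
-/

section Permanent

variable {R : Type*} [CommSemiring R]

theorem permanent_submatrix_perm {ι : Type*} [DecidableEq ι] [Fintype ι] (σ τ : Equiv.Perm ι)
    (A : Matrix ι ι R) : (A.submatrix σ τ).permanent = A.permanent :=
  (Matrix.permanent_permute_cols σ (A.submatrix id τ)).trans (Matrix.permanent_permute_rows τ A)

variable {n : ℕ}

theorem permanent_succ_column_zero (A : Matrix (Fin (n + 1)) (Fin (n + 1)) R) :
    A.permanent = ∑ i, A i 0 * (A.submatrix i.succAbove Fin.succ).permanent := by
  have permanent_swap_succ (i : Fin (n + 1)) :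
      ∑ σ : Equiv.Perm (Fin n), ∏ j, A (Equiv.swap 0 i (σ j).succ) j.succ =
        (A.submatrix i.succAbove Fin.succ).permanent := by
    cases i using Fin.cases with
    | zero => simp [Matrix.permanent]
    | succ i =>
      simp only [← Fin.succAbove_cycleRange]
      exact Matrix.permanent_permute_cols i.cycleRange (A.submatrix i.succ.succAbove Fin.succ)
  simp only [← permanent_swap_succ]
  simp only [Matrix.permanent, mul_sum, ← Equiv.Perm.decomposeFin.symm.sum_comp,
    Fintype.sum_prod_type, Fin.prod_univ_succ, Equiv.Perm.decomposeFin_symm_apply_zero,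
    Equiv.Perm.decomposeFin_symm_apply_succ]

theorem permanent_succ_column (A : Matrix (Fin (n + 1)) (Fin (n + 1)) R) (j : Fin (n + 1)) :
    A.permanent = ∑ i, A i j * (A.submatrix i.succAbove j.succAbove).permanent := by
  rw [← Matrix.permanent_permute_rows j.cycleRange.symm, permanent_succ_column_zero]
  simp [Function.comp_def]

theorem permanent_add_single (A : Matrix (Fin (n + 1)) (Fin (n + 1)) R) (i j : Fin (n + 1))
    (c : R) :
    (A + Matrix.single i j c).permanent =
      A.permanent + c * (A.submatrix i.succAbove j.succAbove).permanent := by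
  have minor_add_single (k : Fin (n + 1)) :
      (A + Matrix.single i j c).submatrix k.succAbove j.succAbove =
        A.submatrix k.succAbove j.succAbove := by
    ext a b
    simp [(Fin.succAbove_ne j b).symm]
  rw [permanent_succ_column _ j, permanent_succ_column A j]
  simp [minor_add_single, add_mul, sum_add_distrib, Matrix.single_apply]

end Permanent

section PathComplement

/-- The complement `J - B` of a path board `B`: the `n × n` matrix that is `0` on those of the
cells `(0, 0), (0, 1), (1, 1), (1, 2), …` with `i + j + 1 < l`, and `1` elsewhere. Listing columns
and rows alternately as `c₀, r₀, c₁, r₁, …`, these cells are the `l - 1` edges of the path on the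
first `l` lines (which all exist when `l ≤ 2 * n`). -/
def pathComplement (R : Type*) [Zero R] [One R] (n l : ℕ) : Matrix (Fin n) (Fin n) R :=
  Matrix.of fun i j =>
    if (j.1 = i.1 ∨ j.1 = i.1 + 1) ∧ i.1 + j.1 + 1 < l then 0 else 1

theorem pathComplement_submatrix_castSucc (R : Type*) [Zero R] [One R] (n l : ℕ) :
    (pathComplement R (n + 1) l).submatrix Fin.castSucc Fin.castSucc = pathComplement R n l :=
  rfl

theorem pathComplement_submatrix_succAbove (R : Type*) [Zero R] [One R] {n l : ℕ}
    (hl : l ≤ 2 * n) :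
    (pathComplement R (n + 1) (l + 1)).submatrix
        (Fin.succAbove ⟨l / 2, by omega⟩) (Fin.succAbove ⟨(l + 1) / 2, by omega⟩) =
      pathComplement R n l := by
  ext i j
  simp only [pathComplement, Matrix.submatrix_apply, Matrix.of_apply, Fin.succAbove, Fin.lt_def,
    Fin.val_castSucc]
  refine if_congr ?_ rfl rfl
  split_ifs <;> simp only [Fin.val_castSucc, Fin.val_succ] <;> omega

theorem pathComplement_add_two (R : Type*) [AddGroupWithOne R] {n l : ℕ} (hl : l ≤ 2 * n) :
    pathComplement R (n + 1) (l + 2) = pathComplement R (n + 1) (l + 1) +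
      Matrix.single ⟨l / 2, by omega⟩ ⟨(l + 1) / 2, by omega⟩ (-1) := by
  ext i j
  simp only [pathComplement, Matrix.add_apply, Matrix.of_apply, Matrix.single_apply, Fin.ext_iff]
  split_ifs <;> first | omega | simp

theorem permanent_pathComplement_of_le_one (R : Type*) [CommSemiring R] (n : ℕ) {l : ℕ}
    (hl : l ≤ 1) :
    (pathComplement R n l).permanent = (n.factorial : R) := by
  have not_lt (a : ℕ) : ¬ a + 1 < l := by omega
  simp [pathComplement, not_lt, Matrix.permanent, Fintype.card_perm]

theorem permanent_pathComplement_add_two (R : Type*) [CommRing R] {n l : ℕ} (hl : l ≤ 2 * n) :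
    (pathComplement R (n + 1) (l + 2)).permanent =
      (pathComplement R (n + 1) (l + 1)).permanent - (pathComplement R n l).permanent := by
  rw [pathComplement_add_two R hl, permanent_add_single,
    pathComplement_submatrix_succAbove R hl, neg_one_mul, sub_eq_add_neg]

theorem choose_succ_sub_succ (l k : ℕ) :
    (l + 1 - k).choose (k + 1) = (l - k).choose k + (l - k).choose (k + 1) := by
  rcases le_or_gt k l with hkl | hlk
  · rw [Nat.succ_sub hkl, Nat.choose_succ_succ']
  · rw [Nat.choose_eq_zero_of_lt (by omega), Nat.choose_eq_zero_of_lt (by omega),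
      Nat.choose_eq_zero_of_lt (by omega)]

theorem permanent_pathComplement (R : Type*) [CommRing R] {n l : ℕ} (hl : l ≤ 2 * n) :
    (pathComplement R n l).permanent =
      ∑ k ∈ range (n + 1), (-1) ^ k * ((l - k).choose k : R) * ((n - k).factorial : R) := by
  induction l using Nat.strong_induction_on generalizing n with
  | _ l ih =>
  obtain hl_le_one | ⟨l, rfl⟩ : l ≤ 1 ∨ ∃ l', l = l' + 2 := by
    rcases l with _ | _ | l <;> simp
  · rw [permanent_pathComplement_of_le_one R n hl_le_one, sum_range_succ', sum_eq_zero]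
    · simp
    · intro k _
      simp [Nat.choose_eq_zero_of_lt (show l - (k + 1) < k + 1 by omega)]
  · obtain ⟨n, rfl⟩ : ∃ n', n = n' + 1 := ⟨n - 1, by omega⟩
    rw [permanent_pathComplement_add_two R (by omega), ih (l + 1) (by omega) (by omega),
      ih l (by omega) (by omega), sum_range_succ' _ (n + 1), sum_range_succ' _ (n + 1),
      add_sub_right_comm, ← sum_sub_distrib]
    congr 1
    refine sum_congr rfl fun k _ => ?_
    rw [Nat.add_sub_add_right (l + 1) 1 k, Nat.add_sub_add_right l 1 k,
      Nat.add_sub_add_right n 1 k, choose_succ_sub_succ]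
    push_cast
    ring

end PathComplement

theorem Jmat_sub_one_sub_Pmat_apply {m : ℕ} (hm : 2 ≤ m) (i j : Fin m) :
    (Jmat m - 1 - Pmat m) i j = if j = i ∨ j.1 = (i.1 + 1) % m then 0 else 1 := by
  have succ_mod_ne : (i.1 + 1) % m ≠ i.1 := by
    rcases Nat.lt_or_ge (i.1 + 1) m with h | h
    · rw [Nat.mod_eq_of_lt h]
      omega
    · rw [show i.1 + 1 = m by omega, Nat.mod_self]
      omega
  simp only [Jmat, Pmat, Matrix.sub_apply, Matrix.of_apply, Matrix.one_apply, Fin.ext_iff]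
  split_ifs <;> omega

theorem delRC_Jmat_sub_one_sub_Pmat_apply (m : ℕ) (i j : Fin (m + 2)) :
    delRC (Jmat (m + 3) - 1 - Pmat (m + 3)) 0 2 i j =
      if (2 ≤ i.1 ∧ j.1 = i.1) ∨ j.1 = i.1 + 1 ∨ (i.1 = m + 1 ∧ j.1 = 0) then 0 else 1 := by
  have succ_succ_mod : (i.1 + 1 + 1) % (m + 3) = if i.1 = m + 1 then 0 else i.1 + 2 := by
    split_ifs with h
    · simp [h]
    · exact Nat.mod_eq_of_lt (by omega)
  simp only [delRC, skipIdx, Matrix.of_apply, not_lt_zero, if_false,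
    Jmat_sub_one_sub_Pmat_apply (show 2 ≤ m + 3 by omega), succ_succ_mod, Fin.ext_iff]
  refine if_congr ?_ rfl rfl
  grind

-- The permutations carry the zeros `(m + 1, 0), (m + 1, m + 1), (m, m + 1), …, (2, 2), (1, 2)`,
-- in this order, to `(0, 0), (0, 1), (1, 1), …, (m - 1, m), (m, m)`, and the isolated zero `(0, 1)`
-- to the last corner.
theorem delRC_Jmat_sub_one_sub_Pmat_eq_submatrix (m : ℕ) :
    delRC (Jmat (m + 3) - 1 - Pmat (m + 3)) 0 2 =
      (pathComplement ℤ (m + 2) (2 * m + 2) +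
        Matrix.single (Fin.last (m + 1)) (Fin.last (m + 1)) (-1)).submatrix
          Fin.revPerm (Equiv.neg (Fin (m + 2))) := by
  ext (i : Fin (m + 2)) (j : Fin (m + 2))
  have val_neg : (-j).1 = if j.1 = 0 then 0 else m + 2 - j.1 := by
    simp only [Fin.val_neg, ← Fin.val_eq_zero_iff]
  rw [delRC_Jmat_sub_one_sub_Pmat_apply]
  simp only [pathComplement, Matrix.submatrix_apply, Matrix.add_apply, Matrix.of_apply,
    Matrix.single_apply, Fin.revPerm_apply, Equiv.neg_apply, Fin.ext_iff, Fin.val_rev,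
    Fin.val_last, val_neg]
  grind

theorem permanent_delRC_Jmat_sub_one_sub_Pmat (m : ℕ) :
    (delRC (Jmat (m + 3) - 1 - Pmat (m + 3)) 0 2).permanent =
      (pathComplement ℤ (m + 2) (2 * m + 2)).permanent -
        (pathComplement ℤ (m + 1) (2 * m + 2)).permanent := by
  rw [delRC_Jmat_sub_one_sub_Pmat_eq_submatrix]
  refine (permanent_submatrix_perm _ _ _).trans ?_
  rw [permanent_add_single, Fin.succAbove_last, pathComplement_submatrix_castSucc, neg_one_mul,
    ← sub_eq_add_neg]

/-- For every `n ≥ 3`,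
`per((J_n - I - P)[1|3]) = ∑_{k=0}^{n-3} (-1)^k · C(2n-k-4, k) · (n-k-2)! · (n-k-2)`. -/
theorem permanent_minor_r3 (n : ℕ) (hn : 3 ≤ n) :
    (delRC (Jmat n - 1 - Pmat n) 0 2).permanent =
      ∑ k ∈ Finset.range (n - 2),
        (-1 : ℤ) ^ k * (Nat.choose (2 * n - k - 4) k : ℤ) *
          (Nat.factorial (n - k - 2) : ℤ) * ((n - k - 2 : ℕ) : ℤ) := by
  obtain ⟨m, rfl⟩ : ∃ m, n = m + 3 := ⟨n - 3, by omega⟩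
  have choose_top : (2 * m + 2 - (m + 2)).choose (m + 2) = 0 :=
    Nat.choose_eq_zero_of_lt (by omega)
  have factorial_sub_factorial {k : ℕ} (hk : k ≤ m + 1) :
      ((m + 2 - k).factorial : ℤ) - (m + 1 - k).factorial =
        (m + 1 - k).factorial * (m + 1 - k : ℕ) := by
    rw [show m + 2 - k = m + 1 - k + 1 by omega, Nat.factorial_succ]
    push_cast
    ring
  rw [permanent_delRC_Jmat_sub_one_sub_Pmat, permanent_pathComplement ℤ (by omega),
    permanent_pathComplement ℤ (by omega), sum_range_succ _ (m + 2), choose_top, Nat.cast_zero,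
    mul_zero, zero_mul, add_zero, ← sum_sub_distrib]
  simp only [← mul_sub]
  rw [sum_range_succ, factorial_sub_factorial le_rfl, Nat.sub_self, Nat.cast_zero, mul_zero,
    mul_zero, add_zero]
  refine sum_congr rfl fun k hk => ?_
  rw [factorial_sub_factorial (mem_range.mp hk).le, ← mul_assoc,
    show 2 * (m + 3) - k - 4 = 2 * m + 2 - k by omega, show m + 3 - k - 2 = m + 1 - k by omega]
end
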